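/- The following three statements are equivalent: (1) for all integers d ≥ 1 and q ≥ 1, every continuous map f : Δ^{(d+1)(q-1)} → ℝ^d has at least ((q−1)!)^d Tverberg partitions (Sierksma's conjecture); (2) for all d ≥ 1 and q ≥ 1, every continuous map f : Δ_d^{(d+1)(q-1)} → ℝ^d has at least ((q−1)!)^d Tverberg partitions; (3) for all d ≥ 1 and q ≥ 1, every continuous map f : Δ_{d-1}^{(d+1)(q-1)} → ℝ^d has at least ((q−1)!)^d winding partitions. -/

import Mathlib

open scoped BigOperators

noncomputable section

/-- Euclidean space `ℝ^d`. -/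
abbrev Euc (d : ℕ) : Type := EuclideanSpace ℝ (Fin d)

/-- The standard `N`-simplex `Δ^N ⊆ ℝ^{N+1}`. -/
def stdSimp (N : ℕ) : Set (Fin (N+1) → ℝ) :=
  {x | (∀ i, 0 ≤ x i) ∧ ∑ i, x i = 1}

/-- The face `σ_S` of `Δ^N` spanned by the vertices in `S`. -/
def simpFace {N : ℕ} (S : Finset (Fin (N+1))) : Set (Fin (N+1) → ℝ) :=
  {x ∈ stdSimp N | ∀ i ∉ S, x i = 0}

/-- The `k`-skeleton `Δ_k^N` of the standard `N`-simplex. -/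
def skel (N k : ℕ) : Set (Fin (N+1) → ℝ) :=
  {x ∈ stdSimp N | {i | x i ≠ 0}.ncard ≤ k + 1}

/-- A Tverberg partition for (the relevant restriction of) `f`: a set of `q`
pairwise disjoint nonempty vertex subsets whose faces have images with a common point. -/
def IsTverbergPartition (q : ℕ) {N d : ℕ}
    (f : (Fin (N+1) → ℝ) → Euc d) (P : Finset (Finset (Fin (N+1)))) : Prop :=
  P.card = q ∧ (∀ S ∈ P, S.Nonempty) ∧
  (∀ S ∈ P, ∀ T ∈ P, S ≠ T → Disjoint S T) ∧
  (⋂ S ∈ P, f '' simpFace S).Nonempty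

/-- The boundary `∂σ_S` of the face `σ_S`. -/
def simpFaceBoundary {N : ℕ} (S : Finset (Fin (N+1))) : Set (Fin (N+1) → ℝ) :=
  {x ∈ simpFace S | ∃ i ∈ S, x i = 0}

/-- `p ∈ W_{≠0}(f|_{∂σ_S})`: either `p` is in the image of the boundary, or the
corestriction of `f|_{∂σ_S}` to `ℝ^d \ {p}` is not nullhomotopic (there is no
continuous map agreeing with `f` on `∂σ_S` that is homotopic to a constant). -/
def InWne (d : ℕ) {N : ℕ} (f : (Fin (N+1) → ℝ) → Euc d)
    (S : Finset (Fin (N+1))) (p : Euc d) : Prop :=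
  p ∈ f '' simpFaceBoundary S ∨
  ¬ ∃ (g : C(↥(simpFaceBoundary S), ↥({p}ᶜ : Set (Euc d))))
      (y : ↥({p}ᶜ : Set (Euc d))),
      (∀ x : ↥(simpFaceBoundary S), (g x : Euc d) = f ↑x) ∧
      g.Homotopic (ContinuousMap.const _ y)

/-- A winding partition (in dimension `d`) for `f` defined on the `(d-1)`-skeleton:
`q` pairwise disjoint nonempty vertex subsets, each of size at most `d+1`, together
with a winding point `p`. -/
def IsWindingPartition (d q : ℕ) {N : ℕ}
    (f : (Fin (N+1) → ℝ) → Euc d) (P : Finset (Finset (Fin (N+1)))) : Prop :=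
  P.card = q ∧ (∀ S ∈ P, S.Nonempty) ∧ (∀ S ∈ P, S.card ≤ d + 1) ∧
  (∀ S ∈ P, ∀ T ∈ P, S ≠ T → Disjoint S T) ∧
  ∃ p : Euc d, ∀ S ∈ P,
    (S.card ≤ d → p ∈ f '' simpFace S) ∧
    (S.card = d + 1 → InWne d f S p)

section SierksmaHelpers

open Set Topology

section Faces
variable {N d : ℕ}

lemma isClosed_stdSimp (N : ℕ) : IsClosed (stdSimp N) := by
  have : stdSimp N = (⋂ i, {x : Fin (N+1) → ℝ | 0 ≤ x i}) ∩ {x | ∑ i, x i = 1} := by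
    ext x; simp [stdSimp]
  rw [this]
  exact (isClosed_iInter fun i => isClosed_le continuous_const (continuous_apply i)).inter
    (isClosed_eq (by fun_prop) continuous_const)

lemma stdSimp_le_one {x : Fin (N+1) → ℝ} (hx : x ∈ stdSimp N) (i : Fin (N+1)) : x i ≤ 1 :=
  hx.2 ▸ Finset.single_le_sum (fun j _ => hx.1 j) (Finset.mem_univ i)

lemma isCompact_stdSimp (N : ℕ) : IsCompact (stdSimp N) :=
  (isCompact_Icc (a := (0 : Fin (N+1) → ℝ)) (b := 1)).of_isClosed_subset (isClosed_stdSimp N)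
    fun _ hx => ⟨hx.1, fun i => stdSimp_le_one hx i⟩

lemma simpFace_subset_stdSimp (S : Finset (Fin (N+1))) : simpFace S ⊆ stdSimp N := fun _ h => h.1

lemma isClosed_simpFace (S : Finset (Fin (N+1))) : IsClosed (simpFace S) := by
  have : simpFace S = stdSimp N ∩ ⋂ i ∈ {i | i ∉ S}, {x : Fin (N+1) → ℝ | x i = 0} := by
    ext x; simp [simpFace]
  rw [this]
  exact (isClosed_stdSimp N).inter (isClosed_biInter fun i _ =>
    isClosed_eq (continuous_apply i) continuous_const)

lemma isCompact_simpFace (S : Finset (Fin (N+1))) : IsCompact (simpFace S) :=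
  (isCompact_stdSimp N).of_isClosed_subset (isClosed_simpFace S) (simpFace_subset_stdSimp S)

lemma simpFaceBoundary_eq (S : Finset (Fin (N+1))) :
    simpFaceBoundary S = ⋃ i ∈ (S : Set (Fin (N+1))), simpFace S ∩ {x | x i = 0} := by
  ext x; simp [simpFaceBoundary]

lemma isClosed_simpFaceBoundary (S : Finset (Fin (N+1))) : IsClosed (simpFaceBoundary S) := by
  rw [simpFaceBoundary_eq]
  exact S.finite_toSet.isClosed_biUnion fun i _ =>
    (isClosed_simpFace S).inter (isClosed_eq (continuous_apply i) continuous_const)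

lemma convex_simpFace (S : Finset (Fin (N+1))) : Convex ℝ (simpFace S) := by
  rintro x ⟨⟨hx, hx1⟩, hx0⟩ y ⟨⟨hy, hy1⟩, hy0⟩ a b ha hb hab
  refine ⟨⟨fun i => ?_, ?_⟩, fun i hi => ?_⟩
  · have := hx i; have := hy i
    simp only [Pi.add_apply, Pi.smul_apply, smul_eq_mul]; positivity
  · simp [Finset.sum_add_distrib, ← Finset.mul_sum, hx1, hy1, hab]
  · simp [hx0 i hi, hy0 i hi]

lemma single_mem_simpFace {S : Finset (Fin (N+1))} {v : Fin (N+1)} (hv : v ∈ S) :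
    (Pi.single v 1 : Fin (N+1) → ℝ) ∈ simpFace S := by
  refine ⟨⟨fun i => ?_, by simp⟩, fun i hi => ?_⟩
  · by_cases h : i = v
    · subst h; simp
    · simp [h]
  · have : i ≠ v := by rintro rfl; exact hi hv
    simp [this]

lemma simpFace_nonempty {S : Finset (Fin (N+1))} (hS : S.Nonempty) :
    (simpFace S : Set (Fin (N+1) → ℝ)).Nonempty :=
  ⟨_, single_mem_simpFace hS.choose_spec⟩

lemma sum_eq_one_of_mem_simpFace {S : Finset (Fin (N+1))} {x : Fin (N+1) → ℝ}
    (hx : x ∈ simpFace S) : ∑ i ∈ S, x i = 1 := by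
  rw [← hx.1.2]
  exact Finset.sum_subset (Finset.subset_univ S) fun i _ hi => hx.2 i hi

lemma simpFace_subset_skel {S : Finset (Fin (N+1))} {k : ℕ} (hS : S.card ≤ k + 1) :
    simpFace S ⊆ skel N k := by
  intro x hx
  refine ⟨hx.1, (Set.ncard_le_ncard (t := (S : Set (Fin (N+1)))) ?_).trans ?_⟩
  · intro i hi
    by_contra h
    exact hi (hx.2 i h)
  · simpa using hS

/-- The support of a point of the standard simplex. -/
def suppFin (x : Fin (N+1) → ℝ) : Finset (Fin (N+1)) := Finset.univ.filter fun i => x i ≠ 0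

lemma mem_suppFin {x : Fin (N+1) → ℝ} {i : Fin (N+1)} : i ∈ suppFin x ↔ x i ≠ 0 := by
  simp [suppFin]

lemma mem_simpFace_suppFin {x : Fin (N+1) → ℝ} (hx : x ∈ stdSimp N) :
    x ∈ simpFace (suppFin x) :=
  ⟨hx, fun i hi => by simpa [mem_suppFin] using hi⟩

lemma mem_skel_iff {k : ℕ} {x : Fin (N+1) → ℝ} :
    x ∈ skel N k ↔ x ∈ stdSimp N ∧ (suppFin x).card ≤ k + 1 := by
  have : {i | x i ≠ 0} = (suppFin x : Set (Fin (N+1))) := by ext; simp [mem_suppFin]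
  unfold skel
  rw [Set.mem_ofPred_eq, this, Set.ncard_coe_finset]

lemma skel_eq_iUnion (N k : ℕ) :
    skel N k = ⋃ S : {S : Finset (Fin (N+1)) // S.card ≤ k + 1}, simpFace S.1 := by
  ext x
  constructor
  · intro hx
    rw [mem_skel_iff] at hx
    exact mem_iUnion.2 ⟨⟨suppFin x, hx.2⟩, mem_simpFace_suppFin hx.1⟩
  · intro hx
    obtain ⟨S, hS⟩ := mem_iUnion.1 hx
    exact simpFace_subset_skel S.2 hS

lemma isClosed_skel (N k : ℕ) : IsClosed (skel N k) := by
  rw [skel_eq_iUnion]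
  exact isClosed_iUnion_of_finite fun S => isClosed_simpFace S.1

lemma skel_mono (N : ℕ) {k l : ℕ} (h : k ≤ l) : skel N k ⊆ skel N l :=
  fun _ hx => ⟨hx.1, hx.2.trans (by omega)⟩

lemma skel_subset_stdSimp (N k : ℕ) : skel N k ⊆ stdSimp N := fun _ hx => hx.1

lemma mem_simpFace_erase {S : Finset (Fin (N+1))} {x : Fin (N+1) → ℝ} (hx : x ∈ simpFace S)
    {v : Fin (N+1)} (hv : x v = 0) : x ∈ simpFace (S.erase v) := by
  refine ⟨hx.1, fun i hi => ?_⟩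
  by_cases h : i = v
  · rw [h, hv]
  · exact hx.2 i fun hS => hi (Finset.mem_erase.2 ⟨h, hS⟩)

lemma simpFaceBoundary_subset_skel {S : Finset (Fin (N+1))} {k : ℕ} (hS : S.card ≤ k + 2) :
    simpFaceBoundary S ⊆ skel N k := by
  rintro x ⟨hx, v, hv, hxv⟩
  refine simpFace_subset_skel ?_ (mem_simpFace_erase hx hxv)
  rw [Finset.card_erase_of_mem hv]; omega

lemma nonempty_of_mem_simpFace {S : Finset (Fin (N+1))} {x : Fin (N+1) → ℝ}
    (hx : x ∈ simpFace S) : S.Nonempty := by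
  rw [Finset.nonempty_iff_ne_empty]
  rintro rfl
  simpa using sum_eq_one_of_mem_simpFace hx

end Faces

section Extension

lemma exists_continuous_eqOn {X : Type*} [TopologicalSpace X] [NormalSpace X] {d : ℕ} {A : Set X}
    (hA : IsClosed A) {f : X → Euc d} (hf : ContinuousOn f A) :
    ∃ g : X → Euc d, Continuous g ∧ EqOn g f A := by
  obtain ⟨g, hg⟩ := ContinuousMap.exists_restrict_eq hA ⟨A.domRestrict f, hf.domRestrict⟩
  exact ⟨g, g.continuous, fun x hx => congrArg (fun k : C(A, Euc d) => k ⟨x, hx⟩) hg⟩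

/-- A nullhomotopic map from a closed subset into a punctured Euclidean space extends to the
whole space without meeting the puncture. -/
lemma exists_extension_of_homotopic_const {X : Type*} [TopologicalSpace X]
    [NormalSpace X] [NormalSpace (X × unitInterval)] {d : ℕ} {A : Set X} (hA : IsClosed A)
    {p : Euc d} (g : C(A, ({p}ᶜ : Set (Euc d)))) (y : ({p}ᶜ : Set (Euc d)))
    (hg : g.Homotopic (ContinuousMap.const _ y)) :
    ∃ φ : X → Euc d, Continuous φ ∧ (∀ x : A, φ x = g x) ∧ ∀ x, φ x ≠ p := by
  classical
  obtain ⟨K⟩ := hg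
  let B : Set (X × unitInterval) := {z | z.1 ∈ A}
  let B' : Set (X × unitInterval) := {z | z.2 = 1}
  have hB : IsClosed B := hA.preimage continuous_fst
  have hB' : IsClosed B' := isClosed_eq continuous_snd continuous_const
  let k : X × unitInterval → Euc d := fun z => if h : z.1 ∈ A then K (z.2, ⟨z.1, h⟩) else y
  have hkB : ContinuousOn k B := by
    rw [continuousOn_iff_continuous_domRestrict]
    have : B.domRestrict k = fun z : B => (K (z.1.2, ⟨z.1.1, z.2⟩) : Euc d) := by
      ext1 z
      exact dif_pos z.2
    rw [this]
    fun_prop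
  have hkB' : ContinuousOn k B' := by
    refine (continuousOn_const (c := (y : Euc d))).congr ?_
    rintro ⟨x, t⟩ (rfl : t = 1)
    by_cases h : x ∈ A
    · simp [k, h]
    · simp [k, h]
  obtain ⟨L, hL, hLk⟩ := exists_continuous_eqOn (hB.union hB')
    (hkB.union_of_isClosed hkB' hB hB')
  let U : Set X := {x | ∀ t, L (x, t) ≠ p}
  have hU : IsOpen U := by
    have : Uᶜ = Prod.fst '' {z : X × unitInterval | L z = p} := by
      ext x
      simp only [U, mem_compl_iff, mem_ofPred_eq, not_forall, not_not, mem_image, Prod.exists,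
        exists_and_right, exists_eq_right]
    rw [← isClosed_compl_iff, this]
    exact isClosedMap_fst_of_compactSpace _ (isClosed_eq hL continuous_const)
  have hAU : Disjoint A Uᶜ := by
    rw [disjoint_compl_right_iff_subset]
    intro x hx t
    rw [hLk (Or.inl hx)]
    simp only [k, dif_pos hx]
    exact (K (t, ⟨x, hx⟩)).2
  obtain ⟨u, hu0, hu1, hu⟩ := exists_continuous_zero_one_of_isClosed hA hU.isClosed_compl hAU
  let φ : X → Euc d := fun x => L (x, ⟨u x, hu x⟩)
  refine ⟨φ, by fun_prop, fun x => ?_, fun x => ?_⟩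
  · have h0 : (⟨u x, hu x⟩ : unitInterval) = 0 := Subtype.ext (hu0 x.2)
    simp only [φ, h0]
    rw [hLk (Or.inl x.2)]
    simp [k, x.2]
  · by_cases hx : x ∈ U
    · exact hx _
    · have h1 : (⟨u x, hu x⟩ : unitInterval) = 1 := Subtype.ext (hu1 hx)
      simp only [φ, h1]
      rw [hLk (Or.inr rfl)]
      have : k (x, 1) = y := by
        by_cases h : x ∈ A <;> simp [k, h]
      rw [this]
      exact y.2

variable {N d : ℕ}

lemma exists_extension_of_not_inWne {f : (Fin (N+1) → ℝ) → Euc d} {S : Finset (Fin (N+1))}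
    {p : Euc d} (h : ¬ InWne d f S p) :
    ∃ φ : (Fin (N+1) → ℝ) → Euc d, Continuous φ ∧ EqOn φ f (simpFaceBoundary S) ∧
      ∀ x, φ x ≠ p := by
  simp only [InWne, not_or, not_not] at h
  obtain ⟨-, g, y, hgf, hg⟩ := h
  obtain ⟨φ, hφ, hφg, hφp⟩ :=
    exists_extension_of_homotopic_const (isClosed_simpFaceBoundary S) g y hg
  exact ⟨φ, hφ, fun x hx => (hφg ⟨x, hx⟩).trans (hgf ⟨x, hx⟩), hφp⟩

lemma not_inWne_of_extension {f φ : (Fin (N+1) → ℝ) → Euc d} {S : Finset (Fin (N+1))}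
    {p : Euc d} (hS : S.Nonempty) (hφ : ContinuousOn φ (simpFace S))
    (hφf : EqOn φ f (simpFaceBoundary S)) (hφp : ∀ x ∈ simpFace S, φ x ≠ p) :
    ¬ InWne d f S p := by
  simp only [InWne, not_or, not_not]
  constructor
  · rintro ⟨x, hx, hxp⟩
    exact hφp x hx.1 ((hφf hx).trans hxp)
  obtain ⟨x₀, hx₀⟩ := simpFace_nonempty hS
  have hmem : ∀ (t : unitInterval) (x : simpFaceBoundary S),
      (1 - (t : ℝ)) • (x : Fin (N+1) → ℝ) + (t : ℝ) • x₀ ∈ simpFace S := fun t x =>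
    convex_simpFace S x.2.1 hx₀ (sub_nonneg.2 t.2.2) t.2.1 (by ring)
  let H : unitInterval × simpFaceBoundary S → ({p}ᶜ : Set (Euc d)) := fun z =>
    ⟨φ ((1 - (z.1 : ℝ)) • (z.2 : Fin (N+1) → ℝ) + (z.1 : ℝ) • x₀), hφp _ (hmem z.1 z.2)⟩
  have hc : Continuous fun z : unitInterval × simpFaceBoundary S =>
      (1 - (z.1 : ℝ)) • (z.2 : Fin (N+1) → ℝ) + (z.1 : ℝ) • x₀ := by fun_prop
  have hH : Continuous H := Continuous.subtype_mk
    (hφ.comp_continuous hc fun z => hmem z.1 z.2) _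
  let g : C(simpFaceBoundary S, ({p}ᶜ : Set (Euc d))) := ⟨fun x => H (0, x), by fun_prop⟩
  refine ⟨g, ⟨φ x₀, hφp _ hx₀⟩, fun x => ?_, ⟨⟨⟨H, hH⟩, fun x => rfl, fun x => ?_⟩⟩⟩
  · simp only [g, H, ContinuousMap.coe_mk]
    simpa using hφf x.2
  · simp [H]

end Extension

section Sard

variable {Θ V W : Type*}
  [NormedAddCommGroup Θ] [NormedSpace ℝ Θ]
  [NormedAddCommGroup V] [NormedSpace ℝ V] [FiniteDimensional ℝ V]
  [NormedAddCommGroup W] [NormedSpace ℝ W]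

lemma det_ne_zero_iff_surjective (A : V →L[ℝ] V) : A.det ≠ 0 ↔ Function.Surjective A := by
  rw [← isUnit_iff_ne_zero, ContinuousLinearMap.det, ← LinearMap.isUnit_iff_isUnit_det,
    LinearMap.isUnit_iff_range_eq_top, LinearMap.range_eq_top]
  rfl

lemma det_comp_ne_zero_iff_surjective (A : W →L[ℝ] V) {π : V →L[ℝ] W}
    (hπ : Function.Surjective π) : (A.comp π).det ≠ 0 ↔ Function.Surjective A := by
  rw [det_ne_zero_iff_surjective, ContinuousLinearMap.coe_comp]
  exact ⟨fun h => h.of_comp, fun h => h.comp hπ⟩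

variable [FiniteDimensional ℝ W]

lemma exists_surjective_of_finrank_le (h : Module.finrank ℝ W ≤ Module.finrank ℝ V) :
    ∃ π : V →L[ℝ] W, Function.Surjective π := by
  obtain ⟨i, hi⟩ := (finrank_le_iff_exists_linearMap (R := ℝ) (M := W) (M' := V)).1 h
  obtain ⟨r, hr⟩ := i.exists_leftInverse_of_injective (LinearMap.ker_eq_bot.2 hi)
  exact ⟨LinearMap.toContinuousLinearMap r, fun w => ⟨i w, LinearMap.congr_fun hr w⟩⟩

/-- Sard's lemma for maps into a space of at least the same dimension. -/
lemma dense_regular_values (h : Module.finrank ℝ W ≤ Module.finrank ℝ V) {Φ : W → V}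
    (hΦ : Differentiable ℝ Φ) :
    Dense {v | ∀ w, Φ w = v → Function.Surjective (fderiv ℝ Φ w)} := by
  borelize V
  obtain ⟨π, hπ⟩ := exists_surjective_of_finrank_le h
  let s : Set V := {v | ((fderiv ℝ Φ (π v)).comp π).det = 0}
  have hnull : (MeasureTheory.Measure.addHaar : MeasureTheory.Measure V) ((Φ ∘ π) '' s) = 0 :=
    MeasureTheory.addHaar_image_eq_zero_of_det_fderivWithin_eq_zero _
      (f' := fun v => (fderiv ℝ Φ (π v)).comp π)
      (fun v _ => ((hΦ (π v)).hasFDerivAt.comp v π.hasFDerivAt).hasFDerivWithinAt)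
      fun v hv => hv
  refine (MeasureTheory.Measure.dense_of_ae (MeasureTheory.compl_mem_ae_iff.2 hnull)).mono ?_
  rintro v hv w rfl
  obtain ⟨z, rfl⟩ := hπ w
  rw [← det_comp_ne_zero_iff_surjective _ hπ]
  exact fun h0 => hv ⟨z, h0, rfl⟩

/-- Parametric transversality to zero over a compact set: for a family of maps which contains all
translates of its members, zeros are regular for an open dense set of parameters. -/
lemma isOpen_dense_regular (h : Module.finrank ℝ W ≤ Module.finrank ℝ V) {Ψ : Θ × W → V}
    (hΨ : ContDiff ℝ 1 Ψ) (s : V →L[ℝ] Θ) (hs : ∀ t τ w, Ψ (t + s τ, w) = Ψ (t, w) + τ)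
    {K : Set W} (hK : IsCompact K) :
    IsOpen {t | ∀ w ∈ K, Ψ (t, w) = 0 →
      Function.Surjective (fderiv ℝ (fun w => Ψ (t, w)) w)} ∧
    Dense {t | ∀ w ∈ K, Ψ (t, w) = 0 →
      Function.Surjective (fderiv ℝ (fun w => Ψ (t, w)) w)} := by
  have hd : Differentiable ℝ Ψ := hΨ.differentiable one_ne_zero
  have hpart : ∀ t w, HasFDerivAt (fun w => Ψ (t, w))
      ((fderiv ℝ Ψ (t, w)).comp (ContinuousLinearMap.inr ℝ Θ W)) w := fun t w =>
    (hd (t, w)).hasFDerivAt.comp w (hasFDerivAt_prodMk_right t w)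
  constructor
  · obtain ⟨π, hπ⟩ := exists_surjective_of_finrank_le h
    rw [← isClosed_compl_iff]
    let D : Θ × W → ℝ := fun z =>
      (((fderiv ℝ Ψ z).comp (ContinuousLinearMap.inr ℝ Θ W)).comp π).det
    have hD : Continuous D := by
      have := hΨ.continuous_fderiv one_ne_zero
      exact ContinuousLinearMap.continuous_det.comp
        ((this.clm_comp continuous_const).clm_comp continuous_const)
    have : CompactSpace K := isCompact_iff_compactSpace.1 hK
    have heq : {t | ∀ w ∈ K, Ψ (t, w) = 0 →
        Function.Surjective (fderiv ℝ (fun w => Ψ (t, w)) w)}ᶜ =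
        Prod.fst '' {z : Θ × K | Ψ (z.1, z.2) = 0 ∧ D (z.1, z.2) = 0} := by
      ext t
      have hiff : ∀ w, ¬ Function.Surjective (fderiv ℝ (fun w => Ψ (t, w)) w) ↔ D (t, w) = 0 := by
        intro w
        rw [(hpart t w).fderiv, ← det_comp_ne_zero_iff_surjective _ hπ, not_not]
      simp only [mem_compl_iff, mem_ofPred_eq, not_forall, hiff]
      constructor
      · rintro ⟨w, hw, h1, h2⟩
        exact ⟨(t, ⟨w, hw⟩), ⟨h1, h2⟩, rfl⟩
      · rintro ⟨⟨_, w⟩, ⟨h1, h2⟩, rfl⟩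
        exact ⟨w, w.2, h1, h2⟩
    rw [heq]
    exact isClosedMap_fst_of_compactSpace _
      ((isClosed_eq (hΨ.continuous.comp (by fun_prop)) continuous_const).inter
        (isClosed_eq (hD.comp (by fun_prop)) continuous_const))
  · intro t
    have hdense := dense_regular_values h (Φ := fun w => Ψ (t, w))
      (fun w => (hpart t w).differentiableAt)
    have hcont : Continuous fun τ : V => t + s (-τ) := by fun_prop
    have h0 : t ∈ closure ((fun τ : V => t + s (-τ)) ''
        {v | ∀ w, Ψ (t, w) = v → Function.Surjective (fderiv ℝ (fun w => Ψ (t, w)) w)}) :=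
      image_closure_subset_closure_image hcont ⟨0, hdense 0, by simp⟩
    refine closure_mono ?_ h0
    rintro _ ⟨τ, hτ, rfl⟩ w - hw
    have : (fun w => Ψ (t + s (-τ), w)) = fun w => Ψ (t, w) + -τ := funext fun w => hs _ _ _
    rw [this, fderiv_add_const]
    refine hτ w ?_
    rw [hs] at hw
    exact add_neg_eq_zero.1 hw

lemma finite_regular_zeros (h : Module.finrank ℝ W = Module.finrank ℝ V) {Φ : W → V}
    (hΦ : Differentiable ℝ Φ) {K : Set W} (hK : IsCompact K)
    (hreg : ∀ w ∈ K, Φ w = 0 → Function.Surjective (fderiv ℝ Φ w)) :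
    {w ∈ K | Φ w = 0}.Finite := by
  by_contra hinf
  have hinf : {w ∈ K | Φ w = 0}.Infinite := hinf
  obtain ⟨w, hw, hacc⟩ := hinf.exists_accPt_of_subset_isCompact
    (K := {w ∈ K | Φ w = 0}) (hK.inter_right (isClosed_eq hΦ.continuous continuous_const))
    Subset.rfl
  have hinj : Function.Injective (fderiv ℝ Φ w) :=
    (LinearMap.injective_iff_surjective_of_finrank_eq_finrank h
      (f := (fderiv ℝ Φ w).toLinearMap)).2 (hreg w hw.1 hw.2)
  obtain ⟨C, -, hC⟩ := LinearMap.exists_antilipschitzWith (fderiv ℝ Φ w).toLinearMap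
    (LinearMap.ker_eq_bot.2 hinj)
  have hne := (hΦ w).hasFDerivAt.eventually_ne (c := 0) ⟨C, hC⟩
  rw [accPt_iff_frequently_nhdsNE] at hacc
  obtain ⟨z, hz, hz'⟩ := (hacc.and_eventually hne).exists
  exact hz' hz.2

end Sard

section Genericity

variable {N d : ℕ}

/-- General position of the images of families of pairwise disjoint faces: such families do not
meet if the sum of the codimensions exceeds `d`, and meet in finitely many points if it equals
`d`. -/
def GenPos (d : ℕ) {N : ℕ} (g : (Fin (N+1) → ℝ) → Euc d) : Prop :=
  ∀ P : Finset (Finset (Fin (N+1))), (∀ S ∈ P, S.Nonempty) →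
    (∀ S ∈ P, ∀ T ∈ P, S ≠ T → Disjoint S T) →
    (∑ S ∈ P, S.card + d < (d + 1) * P.card → ¬ ∃ p, ∀ S ∈ P, p ∈ g '' simpFace S) ∧
    (∑ S ∈ P, S.card + d = (d + 1) * P.card →
      {y | ∃ S ∈ P, y ∈ simpFace S ∧ ∀ T ∈ P, g y ∈ g '' simpFace T}.Finite)

/-- The affine parametrization of the affine hull of a face, by the barycentric coordinates at
the vertices other than `v`. -/
def faceChart (S : Finset (Fin (N+1))) (v : Fin (N+1)) (u : S.erase v → ℝ) : Fin (N+1) → ℝ :=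
  fun i => if h : i ∈ S.erase v then u ⟨i, h⟩ else if i = v then 1 - ∑ j, u j else 0

lemma contDiff_faceChart (S : Finset (Fin (N+1))) (v : Fin (N+1)) :
    ContDiff ℝ 1 (faceChart S v) := by
  rw [contDiff_pi]
  intro i
  unfold faceChart
  split_ifs <;> fun_prop

lemma sum_faceChart_smul {S : Finset (Fin (N+1))} {v : Fin (N+1)} (hv : v ∈ S)
    (u : S.erase v → ℝ) {E : Type*} [AddCommGroup E] [Module ℝ E] {t : Fin (N+1) → E} {a : E}
    (ht : ∀ i ∈ S, t i = a) : ∑ i, faceChart S v u i • t i = a := by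
  have h1 : ∑ i, faceChart S v u i • t i = ∑ i ∈ S, faceChart S v u i • a := by
    rw [← Finset.sum_subset (Finset.subset_univ S)]
    · exact Finset.sum_congr rfl fun i hi => by rw [ht i hi]
    · intro i _ hi
      have h2 : i ≠ v := by rintro rfl; exact hi hv
      simp [faceChart, hi, h2]
  rw [h1, ← Finset.sum_smul, ← Finset.add_sum_erase S _ hv]
  have h3 : ∑ i ∈ S.erase v, faceChart S v u i = ∑ j, u j := by
    rw [← Finset.sum_coe_sort]
    refine Finset.sum_congr rfl fun i _ => ?_
    exact dif_pos i.2
  rw [h3]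
  simp [faceChart]

/-- Restriction of a point to the coordinates in `A`. -/
def restrictCoords (A : Finset (Fin (N+1))) (x : Fin (N+1) → ℝ) (j : A) : ℝ := x j

lemma continuous_restrictCoords (A : Finset (Fin (N+1))) : Continuous (restrictCoords A) :=
  continuous_pi fun j => continuous_apply j.1

lemma faceChart_restrict {S : Finset (Fin (N+1))} {v : Fin (N+1)} (hv : v ∈ S)
    {x : Fin (N+1) → ℝ} (hx : x ∈ simpFace S) :
    faceChart S v (restrictCoords _ x) = x := by
  ext i
  have h1 : ∑ j : S.erase v, x j = 1 - x v := by
    rw [Finset.sum_coe_sort (S.erase v) x, ← sum_eq_one_of_mem_simpFace hx,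
      ← Finset.add_sum_erase S x hv]
    ring
  unfold faceChart
  split_ifs with h h'
  · rfl
  · rw [h', show ∑ j, restrictCoords (S.erase v) x j = 1 - x v from h1]; ring
  · refine (hx.2 i fun hi => h (Finset.mem_erase.2 ⟨h', hi⟩)).symm

/-- The perturbation of `g` by the linear map with given values at the vertices. -/
def perturb (g : (Fin (N+1) → ℝ) → Euc d) (t : Fin (N+1) → Euc d) (x : Fin (N+1) → ℝ) : Euc d :=
  g x + ∑ i, x i • t i

lemma norm_sum_smul_le {x : Fin (N+1) → ℝ} (hx : x ∈ stdSimp N) (t : Fin (N+1) → Euc d) :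
    ‖∑ i, x i • t i‖ ≤ ‖t‖ := by
  calc ‖∑ i, x i • t i‖ ≤ ∑ i, ‖x i • t i‖ := norm_sum_le _ _
    _ ≤ ∑ i, x i * ‖t‖ := Finset.sum_le_sum fun i _ => by
        rw [norm_smul, Real.norm_of_nonneg (hx.1 i)]
        exact mul_le_mul_of_nonneg_left (norm_le_pi_norm t i) (hx.1 i)
    _ = ‖t‖ := by rw [← Finset.sum_mul, hx.2, one_mul]

lemma card_sum_erase {P : Finset (Finset (Fin (N+1)))} {c : Finset (Fin (N+1)) → Fin (N+1)}
    (hc : ∀ S ∈ P, c S ∈ S) :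
    ∑ S : P, (S.1.erase (c S.1)).card + P.card = ∑ S ∈ P, S.card := by
  rw [Finset.sum_coe_sort P fun S => (S.erase (c S)).card, Finset.card_eq_sum_ones,
    ← Finset.sum_add_distrib]
  exact Finset.sum_congr rfl fun S hS => Finset.card_erase_add_one (hc S hS)

/-- Parameters for the points of a family of faces, with pivot vertices `c`, and a point of
`ℝ^d`. -/
abbrev CoincDom (d : ℕ) (c : Finset (Fin (N+1)) → Fin (N+1)) (P : Finset (Finset (Fin (N+1)))) :
    Type :=
  (∀ S : P, (S.1.erase (c S.1) → ℝ)) × Euc d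

/-- The defect map whose zeros are the coincidences of the perturbed map on a family of faces. -/
def coincMap (g : (Fin (N+1) → ℝ) → Euc d) (c : Finset (Fin (N+1)) → Fin (N+1))
    (P : Finset (Finset (Fin (N+1)))) (z : (Fin (N+1) → Euc d) × CoincDom d c P) (S : P) :
    Euc d :=
  perturb g z.1 (faceChart S.1 (c S.1) (z.2.1 S)) - z.2.2

lemma contDiff_coincMap {g : (Fin (N+1) → ℝ) → Euc d} (hg : ContDiff ℝ 1 g)
    (c : Finset (Fin (N+1)) → Fin (N+1)) (P : Finset (Finset (Fin (N+1)))) :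
    ContDiff ℝ 1 (coincMap g c P) := by
  rw [contDiff_pi]
  intro S
  have h0 : ContDiff ℝ 1 fun z : (Fin (N+1) → Euc d) × CoincDom d c P => z.2.1 S :=
    contDiff_pi.1 (contDiff_fst.comp contDiff_snd) S
  have h1 := (contDiff_faceChart S.1 (c S.1)).comp h0
  have h2 := contDiff_pi.1 h1
  unfold coincMap perturb
  refine ((hg.comp h1).add (ContDiff.sum fun i _ => (h2 i).smul ?_)).sub
    (contDiff_snd.comp contDiff_snd)
  exact (contDiff_apply ℝ _ i).comp contDiff_fst

lemma finrank_coincDom (c : Finset (Fin (N+1)) → Fin (N+1)) (P : Finset (Finset (Fin (N+1)))) :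
    Module.finrank ℝ (CoincDom d c P) = ∑ S : P, (S.1.erase (c S.1)).card + d := by
  simp only [CoincDom, Module.finrank_prod, Module.finrank_pi_fintype, Module.finrank_self,
    finrank_euclideanSpace_fin, Finset.sum_const, Finset.card_univ, Fintype.card_coe, smul_eq_mul,
    mul_one]

/-- The perturbation that is constant on each member of a family of disjoint faces. -/
def facewiseConst (d : ℕ) (P : Finset (Finset (Fin (N+1)))) :
    (P → Euc d) →L[ℝ] (Fin (N+1) → Euc d) :=
  ContinuousLinearMap.pi fun i =>
    ∑ S : P, if i ∈ S.1 then ContinuousLinearMap.proj S else 0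

lemma facewiseConst_apply {P : Finset (Finset (Fin (N+1)))}
    (hdisj : ∀ S ∈ P, ∀ T ∈ P, S ≠ T → Disjoint S T) (τ : P → Euc d) (S : P)
    {i : Fin (N+1)} (hi : i ∈ S.1) : facewiseConst d P τ i = τ S := by
  simp only [facewiseConst, ContinuousLinearMap.pi_apply, sum_apply]
  rw [Finset.sum_eq_single S]
  · simp [hi]
  · intro T _ hTS
    have : i ∉ T.1 := fun hiT => Finset.disjoint_left.1
      (hdisj S.1 S.2 T.1 T.2 fun h => hTS (Subtype.ext h.symm)) hi hiT
    simp [this]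
  · simp

lemma coincMap_add {g : (Fin (N+1) → ℝ) → Euc d} {c : Finset (Fin (N+1)) → Fin (N+1)}
    {P : Finset (Finset (Fin (N+1)))} (hc : ∀ S ∈ P, c S ∈ S)
    (hdisj : ∀ S ∈ P, ∀ T ∈ P, S ≠ T → Disjoint S T) (t : Fin (N+1) → Euc d) (τ : P → Euc d)
    (w : CoincDom d c P) :
    coincMap g c P (t + facewiseConst d P τ, w) = coincMap g c P (t, w) + τ := by
  ext1 S
  simp only [coincMap, perturb, Pi.add_apply, smul_add, Finset.sum_add_distrib]
  rw [sum_faceChart_smul (hc S.1 S.2) _ fun i hi => facewiseConst_apply hdisj τ S hi]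
  abel

/-- For a single family of disjoint faces, the coincidences of a linear perturbation are as
expected for an open dense set of perturbations. -/
lemma exists_isOpen_dense_perturb {g : (Fin (N+1) → ℝ) → Euc d} (hg : ContDiff ℝ 1 g)
    {P : Finset (Finset (Fin (N+1)))} (hP : ∀ S ∈ P, S.Nonempty)
    (hdisj : ∀ S ∈ P, ∀ T ∈ P, S ≠ T → Disjoint S T)
    (hcard : ∑ S ∈ P, S.card + d ≤ (d + 1) * P.card) :
    ∃ U : Set (Fin (N+1) → Euc d), IsOpen U ∧ Dense U ∧ ∀ t ∈ U, ‖t‖ ≤ 1 →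
      (∑ S ∈ P, S.card + d < (d + 1) * P.card →
        ¬ ∃ p, ∀ S ∈ P, p ∈ perturb g t '' simpFace S) ∧
      (∑ S ∈ P, S.card + d = (d + 1) * P.card →
        {y | ∃ S ∈ P, y ∈ simpFace S ∧ ∀ T ∈ P, perturb g t y ∈ perturb g t '' simpFace T}.Finite)
    := by
  classical
  let c : Finset (Fin (N+1)) → Fin (N+1) := fun S => if h : S.Nonempty then h.choose else 0
  have hc : ∀ S ∈ P, c S ∈ S := fun S hS => by
    simp only [c, dif_pos (hP S hS)]
    exact (hP S hS).choose_spec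
  clear_value c
  have hW := finrank_coincDom (d := d) c P
  have hV : Module.finrank ℝ (P → Euc d) = P.card * d := by
    simp [Module.finrank_pi_fintype]
  have hsum := card_sum_erase hc
  have hmul : (d + 1) * P.card = P.card * d + P.card := by ring
  have hΨ := contDiff_coincMap hg c P
  obtain ⟨R, hR⟩ := ((isCompact_stdSimp N).image hg.continuous).isBounded.exists_norm_le
  obtain ⟨K, hK, hKmem⟩ : ∃ K : Set (CoincDom d c P), IsCompact K ∧
      ∀ w : CoincDom d c P, w ∈ K ↔ (∀ S : P, w.1 S ∈ restrictCoords (S.1.erase (c S.1)) ''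
        simpFace S.1) ∧ ‖w.2‖ ≤ R + 1 :=
    ⟨_, (isCompact_univ_pi fun S : P => (isCompact_simpFace S.1).image
      (continuous_restrictCoords (S.1.erase (c S.1)))).prod
      (isCompact_closedBall (0 : Euc d) (R + 1)), fun w => by
        rw [mem_prod, mem_univ_pi, mem_closedBall_zero_iff]⟩
  obtain ⟨hopen, hdense⟩ := isOpen_dense_regular (by omega) hΨ (facewiseConst d P)
    (coincMap_add hc hdisj) hK
  refine ⟨{t | ∀ w ∈ K, coincMap g c P (t, w) = 0 →
    Function.Surjective (fderiv ℝ (fun w => coincMap g c P (t, w)) w)}, hopen, hdense,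
    fun t ht ht1 => ?_⟩
  have key : ∀ (x : Finset (Fin (N+1)) → Fin (N+1) → ℝ) (p : Euc d), P.Nonempty →
      (∀ S ∈ P, x S ∈ simpFace S ∧ perturb g t (x S) = p) →
      ((fun S => restrictCoords _ (x S.1), p) : CoincDom d c P) ∈
        {w ∈ K | coincMap g c P (t, w) = 0} := by
    rintro x p ⟨S₀, hS₀⟩ hx
    refine ⟨(hKmem _).2 ⟨fun S => mem_image_of_mem _ (hx S.1 S.2).1, ?_⟩, ?_⟩
    · obtain ⟨h1, h2⟩ := hx S₀ hS₀
      rw [← h2]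
      exact (norm_add_le _ _).trans (add_le_add (hR _ ⟨_, h1.1, rfl⟩)
        ((norm_sum_smul_le h1.1 t).trans ht1))
    · ext1 S
      simp only [coincMap]
      rw [faceChart_restrict (hc S.1 S.2) (hx S.1 S.2).1, (hx S.1 S.2).2, sub_self]
      rfl
  have hne : P.Nonempty ∨ P = ∅ := P.eq_empty_or_nonempty.symm
  constructor
  · rintro hlt ⟨p, hp⟩
    obtain hne | rfl := hne
    · choose! x hx using hp
      obtain ⟨h1, h2⟩ := key x p hne hx
      have h3 := LinearMap.finrank_le_finrank_of_surjective
        (f := (fderiv ℝ (fun w => coincMap g c P (t, w)) _).toLinearMap) (ht _ h1 h2)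
      omega
    · simp at hlt
  · intro heq
    have hfin := finite_regular_zeros (Φ := fun w => coincMap g c P (t, w)) (by omega)
      (hΨ.comp (contDiff_prodMk_right t) |>.differentiable one_ne_zero) hK ht
    refine (Set.finite_iUnion fun S : P =>
      hfin.image fun w => faceChart S.1 (c S.1) (w.1 S)).subset ?_
    rintro y ⟨S, hS, hy, hyT⟩
    choose! x hx using hyT
    have h1 := key (Function.update x S y) (perturb g t y) ⟨S, hS⟩ fun T hT => by
      by_cases h : T = S
      · subst h; simp [hy]
      · simp [h, hx T hT]
    refine mem_iUnion.2 ⟨⟨S, hS⟩, (mem_image _ _ _).2 ⟨_, h1, ?_⟩⟩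
    simp only [Function.update_self]
    exact faceChart_restrict (hc S hS) hy

lemma exists_genPos_approx {f : (Fin (N+1) → ℝ) → Euc d} (hf : Continuous f) {ε : ℝ}
    (hε : 0 < ε) : ∃ g : (Fin (N+1) → ℝ) → Euc d, Continuous g ∧ GenPos d g ∧
      ∀ x ∈ stdSimp N, dist (g x) (f x) < ε := by
  classical
  obtain ⟨g, hg, hgf, -⟩ := hf.exists_contDiff_approx 1 (ε := fun _ => ε / 2) continuous_const
    fun _ => half_pos hε
  let I := {P : Finset (Finset (Fin (N+1))) // (∀ S ∈ P, S.Nonempty) ∧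
    (∀ S ∈ P, ∀ T ∈ P, S ≠ T → Disjoint S T) ∧ ∑ S ∈ P, S.card + d ≤ (d + 1) * P.card}
  have h1 := fun P : I => exists_isOpen_dense_perturb (d := d) hg P.2.1 P.2.2.1 P.2.2.2
  choose U hUo hUd hU using h1
  have hdense := dense_iInter_of_isOpen hUo hUd
  obtain ⟨t, ht, htd⟩ := hdense.exists_dist_lt 0 (lt_min (half_pos hε) one_pos)
  rw [dist_zero_left, lt_min_iff] at htd
  refine ⟨perturb g t, ?_, fun P hP hdisj => ?_, fun x hx => ?_⟩
  · have := hg.continuous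
    unfold perturb
    fun_prop
  · by_cases hcard : ∑ S ∈ P, S.card + d ≤ (d + 1) * P.card
    · exact hU ⟨P, hP, hdisj, hcard⟩ t (mem_iInter.1 ht _) htd.2.le
    · exact ⟨fun h => absurd h.le hcard, fun h => absurd h.le hcard⟩
  · calc dist (perturb g t x) (f x) ≤ dist (perturb g t x) (g x) + dist (g x) (f x) :=
          dist_triangle _ _ _
      _ < ε / 2 + ε / 2 := by
          refine add_lt_add_of_le_of_lt ?_ (hgf x)
          rw [perturb, dist_eq_norm, add_sub_cancel_left]
          exact (norm_sum_smul_le hx t).trans htd.1.le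
      _ = ε := add_halves ε

end Genericity

section Robustness

variable {N d : ℕ}

/-- A set of faces on which some maps simultaneously hit a point does not grow under small
perturbations of the map, provided that this holds locally for every face and point. -/
lemma exists_perturbation_bound
    {Hit : ((Fin (N+1) → ℝ) → Euc d) → Finset (Fin (N+1)) → Euc d → Prop}
    {f : (Fin (N+1) → ℝ) → Euc d} (hf : Continuous f)
    (hloc : ∀ S p, ¬ Hit f S p → ∃ ε > 0, ∀ f', Continuous f' →
      (∀ x ∈ stdSimp N, dist (f' x) (f x) < ε) → ∀ p', dist p' p < ε → ¬ Hit f' S p')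
    {A : Set (Finset (Finset (Fin (N+1))))}
    (hA : ∀ P ∈ A, ∃ S ∈ P, ∀ f' p, Hit f' S p → p ∈ f' '' simpFace S) :
    ∃ ε > 0, ∀ f', Continuous f' → (∀ x ∈ stdSimp N, dist (f' x) (f x) < ε) →
      ∀ P ∈ A, (∃ p, ∀ S ∈ P, Hit f' S p) → ∃ p, ∀ S ∈ P, Hit f S p := by
  obtain ⟨R, hR⟩ := ((isCompact_stdSimp N).image hf).isBounded.exists_norm_le
  have hsingle : ∀ P : Finset (Finset (Fin (N+1))), ∃ ε > 0, P ∈ A → ∀ f', Continuous f' →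
      (∀ x ∈ stdSimp N, dist (f' x) (f x) < ε) →
      (∃ p, ∀ S ∈ P, Hit f' S p) → ∃ p, ∀ S ∈ P, Hit f S p := by
    intro P
    by_cases hP : P ∈ A ∧ ¬ ∃ p, ∀ S ∈ P, Hit f S p
    swap
    · refine ⟨1, one_pos, fun h f' _ _ _ => ?_⟩
      by_contra h'
      exact hP ⟨h, h'⟩
    obtain ⟨hPA, hno⟩ := hP
    push Not at hno
    have hcomp : ∃ ε > 0, ∀ p ∈ Metric.closedBall (0 : Euc d) (R + 1), ∀ f', Continuous f' →
        (∀ x ∈ stdSimp N, dist (f' x) (f x) < ε) → ∃ S ∈ P, ¬ Hit f' S p := by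
      refine (isCompact_closedBall (0 : Euc d) (R + 1)).induction_on
        (p := fun B => ∃ ε > 0, ∀ p ∈ B, ∀ f', Continuous f' →
        (∀ x ∈ stdSimp N, dist (f' x) (f x) < ε) → ∃ S ∈ P, ¬ Hit f' S p) ?_ ?_ ?_ ?_
      · exact ⟨1, one_pos, by simp⟩
      · rintro s t hst ⟨ε, hε, h⟩
        exact ⟨ε, hε, fun p hp => h p (hst hp)⟩
      · rintro s t ⟨ε, hε, h⟩ ⟨ε', hε', h'⟩
        refine ⟨min ε ε', lt_min hε hε', ?_⟩
        rintro p (hp | hp) f' hf' hff'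
        · exact h p hp f' hf' fun x hx => (hff' x hx).trans_le (min_le_left _ _)
        · exact h' p hp f' hf' fun x hx => (hff' x hx).trans_le (min_le_right _ _)
      · intro p _
        obtain ⟨S, hS, hSp⟩ := hno p
        obtain ⟨ε, hε, h⟩ := hloc S p hSp
        exact ⟨Metric.ball p ε, mem_nhdsWithin_of_mem_nhds (Metric.ball_mem_nhds p hε), ε, hε,
          fun p' hp' f' hf' hff' => ⟨S, hS, h f' hf' hff' p' hp'⟩⟩
    obtain ⟨ε, hε, h⟩ := hcomp
    refine ⟨min ε 1, lt_min hε one_pos, fun _ f' hf' hff' ⟨p, hp⟩ => ?_⟩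
    obtain ⟨S, hS, himg⟩ := hA P hPA
    obtain ⟨x, hx, hxp⟩ := himg f' p (hp S hS)
    have hpB : p ∈ Metric.closedBall (0 : Euc d) (R + 1) := by
      rw [mem_closedBall_zero_iff, ← hxp]
      have h1 := hR _ ⟨x, hx.1, rfl⟩
      have h2 := ((hff' x hx.1).trans_le (min_le_right _ _)).le
      rw [dist_eq_norm] at h2
      calc ‖f' x‖ = ‖f x + (f' x - f x)‖ := by congr 1; abel
        _ ≤ R + 1 := (norm_add_le _ _).trans (add_le_add h1 h2)
    obtain ⟨T, hT, hTp⟩ := h p hpB f' hf' fun x hx => (hff' x hx).trans_le (min_le_left _ _)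
    exact absurd (hp T hT) hTp
  choose ε hε h using hsingle
  obtain ⟨P₀, hP₀⟩ := Finite.exists_min ε
  exact ⟨ε P₀, hε P₀, fun f' hf' hff' P hP =>
    h P hP f' hf' fun x hx => (hff' x hx).trans_le (hP₀ P)⟩

lemma notMem_image_simpFace_of_close {f : (Fin (N+1) → ℝ) → Euc d} (hf : Continuous f)
    {S : Finset (Fin (N+1))} {p : Euc d} (hp : p ∉ f '' simpFace S) :
    ∃ ε > 0, ∀ f' : (Fin (N+1) → ℝ) → Euc d,
      (∀ x ∈ stdSimp N, dist (f' x) (f x) < ε) → ∀ p', dist p' p < ε → p' ∉ f' '' simpFace S := by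
  obtain ⟨δ, hδ, h⟩ := Metric.isOpen_iff.1
    ((isCompact_simpFace S).image hf).isClosed.isOpen_compl p hp
  refine ⟨δ / 2, half_pos hδ, ?_⟩
  rintro f' hff' p' hp' ⟨x, hx, rfl⟩
  refine h (?_ : dist (f x) p < δ) ⟨x, hx, rfl⟩
  have := hff' x hx.1
  rw [dist_comm] at this
  linarith [dist_triangle (f x) (f' x) p]

lemma not_inWne_of_close {f : (Fin (N+1) → ℝ) → Euc d} (hf : Continuous f)
    {S : Finset (Fin (N+1))} (hS : S.Nonempty) {p : Euc d} (hp : ¬ InWne d f S p) :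
    ∃ ε > 0, ∀ f' : (Fin (N+1) → ℝ) → Euc d, Continuous f' →
      (∀ x ∈ stdSimp N, dist (f' x) (f x) < ε) → ∀ p', dist p' p < ε → ¬ InWne d f' S p' := by
  obtain ⟨φ, hφ, hφf, hφp⟩ := exists_extension_of_not_inWne hp
  obtain ⟨ε, hε, h⟩ := notMem_image_simpFace_of_close hφ (S := S) (p := p)
    (by rintro ⟨x, -, hx⟩; exact hφp x hx)
  refine ⟨ε, hε, fun f' hf' hff' p' hp' => ?_⟩
  refine not_inWne_of_extension hS (φ := fun x => φ x + (f' x - f x))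
    (by fun_prop) (fun x hx => ?_) fun x hx hxp => ?_
  · simp [hφf hx]
  · refine h (fun x => φ x + (f' x - f x)) (fun x hx => ?_) p' hp' ⟨x, hx, hxp⟩
    rw [dist_eq_norm, add_sub_cancel_left, ← dist_eq_norm]
    exact hff' x hx

lemma exists_tverberg_perturbation_bound {f : (Fin (N+1) → ℝ) → Euc d} (hf : Continuous f)
    {q : ℕ} (hq : 1 ≤ q) :
    ∃ ε > 0, ∀ f', Continuous f' → (∀ x ∈ stdSimp N, dist (f' x) (f x) < ε) →
      ∀ P, IsTverbergPartition q f' P → IsTverbergPartition q f P := by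
  obtain ⟨ε, hε, h⟩ := exists_perturbation_bound (Hit := fun f S p => p ∈ f '' simpFace S) hf
    (fun S p hp => by
      obtain ⟨ε, hε, h⟩ := notMem_image_simpFace_of_close hf hp
      exact ⟨ε, hε, fun f' _ => h f'⟩)
    (A := {P | P.Nonempty}) (by rintro P ⟨S, hS⟩; exact ⟨S, hS, fun _ _ => id⟩)
  refine ⟨ε, hε, fun f' hf' hff' P ⟨hP1, hP2, hP3, p, hp⟩ => ⟨hP1, hP2, hP3, ?_⟩⟩
  obtain ⟨p', hp'⟩ := h f' hf' hff' P (Finset.card_pos.1 (by omega)) ⟨p, mem_iInter₂.1 hp⟩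
  exact ⟨p', mem_iInter₂.2 hp'⟩

lemma sum_card_le_of_disjoint {P : Finset (Finset (Fin (N+1)))}
    (hP : ∀ S ∈ P, ∀ T ∈ P, S ≠ T → Disjoint S T) : ∑ S ∈ P, S.card ≤ N + 1 := by
  rw [← Finset.card_biUnion (t := fun S => S) hP]
  exact (Finset.card_le_univ _).trans (by simp)

lemma exists_small_of_disjoint {q : ℕ} (hq : 1 ≤ q) (hN : N = (d + 1) * (q - 1))
    {P : Finset (Finset (Fin (N+1)))} (hPq : P.card = q)
    (hP : ∀ S ∈ P, ∀ T ∈ P, S ≠ T → Disjoint S T) (hd : 1 ≤ d) : ∃ S ∈ P, S.card ≤ d := by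
  by_contra! h
  have h1 := sum_card_le_of_disjoint hP
  have h2 : P.card * (d + 1) ≤ ∑ S ∈ P, S.card := by
    rw [← smul_eq_mul]
    exact Finset.card_nsmul_le_sum P _ _ fun S hS => h S hS
  obtain ⟨q, rfl⟩ : ∃ r, q = r + 1 := ⟨q - 1, by omega⟩
  rw [hPq] at h2
  simp only [Nat.add_sub_cancel] at hN
  nlinarith

lemma exists_winding_perturbation_bound {f : (Fin (N+1) → ℝ) → Euc d} (hf : Continuous f)
    {q : ℕ} (hd : 1 ≤ d) (hq : 1 ≤ q) (hN : N = (d + 1) * (q - 1)) :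
    ∃ ε > 0, ∀ f', Continuous f' → (∀ x ∈ stdSimp N, dist (f' x) (f x) < ε) →
      ∀ P, IsWindingPartition d q f' P → IsWindingPartition d q f P := by
  obtain ⟨ε, hε, h⟩ := exists_perturbation_bound
    (Hit := fun f S p => (S.card ≤ d → p ∈ f '' simpFace S) ∧ (S.card = d + 1 → InWne d f S p)) hf
    (fun S p hp => by
      rw [not_and_or] at hp
      push Not at hp
      obtain ⟨hS, hp⟩ | ⟨hS, hp⟩ := hp
      · obtain ⟨ε, hε, h⟩ := notMem_image_simpFace_of_close hf hp
        exact ⟨ε, hε, fun f' _ hff' p' hp' h' => h f' hff' p' hp' (h'.1 hS)⟩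
      · obtain ⟨ε, hε, h⟩ := not_inWne_of_close hf (Finset.card_pos.1 (by omega)) hp
        exact ⟨ε, hε, fun f' hf' hff' p' hp' h' => h f' hf' hff' p' hp' (h'.2 hS)⟩)
    (A := {P | ∃ S ∈ P, S.card ≤ d})
    (by rintro P ⟨S, hS, hSd⟩; exact ⟨S, hS, fun _ _ h => h.1 hSd⟩)
  exact ⟨ε, hε, fun f' hf' hff' P ⟨hP1, hP2, hP3, hP4, hp⟩ => ⟨hP1, hP2, hP3, hP4,
    h f' hf' hff' P (exists_small_of_disjoint hq hN hP1 hP4 hd) hp⟩⟩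

/-- For a map in general position, Tverberg partitions consist of small sets and cover all
vertices. -/
lemma GenPos.card_le_of_tverberg {g : (Fin (N+1) → ℝ) → Euc d} (hg : GenPos d g) {q : ℕ}
    (hq : 1 ≤ q) (hN : N = (d + 1) * (q - 1)) {P : Finset (Finset (Fin (N+1)))}
    (hP : IsTverbergPartition q g P) :
    (∀ S ∈ P, S.card ≤ d + 1) ∧ ∑ S ∈ P, S.card = N + 1 := by
  classical
  obtain ⟨hP1, hP2, hP3, p, hp⟩ := hP
  have h1 := sum_card_le_of_disjoint hP3
  have hsub : P.filter (fun S => S.card ≤ d + 1) ⊆ P := Finset.filter_subset _ _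
  have h2 := (hg (P.filter fun S => S.card ≤ d + 1) (fun S hS => hP2 S (hsub hS))
    fun S hS T hT => hP3 S (hsub hS) T (hsub hT)).1
  have h3 : ¬ _ := fun h => h2 h ⟨p, fun S hS => mem_iInter₂.1 hp S (hsub hS)⟩
  have h4 := Finset.sum_filter_add_sum_filter_not P (fun S => S.card ≤ d + 1) fun S => S.card
  have h5 := Finset.card_filter_add_card_filter_not (s := P) fun S => S.card ≤ d + 1
  have h6 : (P.filter fun S => ¬ S.card ≤ d + 1).card * (d + 2) ≤
      ∑ S ∈ P.filter (fun S => ¬ S.card ≤ d + 1), S.card := by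
    rw [← smul_eq_mul]
    refine Finset.card_nsmul_le_sum _ _ _ fun S hS => ?_
    have := (Finset.mem_filter.1 hS).2
    omega
  obtain ⟨q, rfl⟩ : ∃ r, q = r + 1 := ⟨q - 1, by omega⟩
  simp only [Nat.add_sub_cancel] at hN
  have h7 : (P.filter fun S => ¬ S.card ≤ d + 1).card = 0 := by nlinarith
  refine ⟨fun S hS => ?_, by rw [h7] at h5; nlinarith⟩
  by_contra h
  exact Finset.notMem_empty S (Finset.card_eq_zero.1 h7 ▸ Finset.mem_filter.2 ⟨hS, h⟩)

/-- The lower bound for the number of Tverberg partitions already holds for those partitions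
that cover all vertices and consist of sets of size at most `d + 1`. -/
lemma le_ncard_covering_tverberg {q n : ℕ} (hq : 1 ≤ q) (hN : N = (d + 1) * (q - 1))
    (H : ∀ f : (Fin (N+1) → ℝ) → Euc d, ContinuousOn f (stdSimp N) →
      n ≤ {P : Finset (Finset (Fin (N+1))) | IsTverbergPartition q f P}.ncard)
    {f : (Fin (N+1) → ℝ) → Euc d} (hf : Continuous f) :
    n ≤ {P : Finset (Finset (Fin (N+1))) | IsTverbergPartition q f P ∧
      (∀ S ∈ P, S.card ≤ d + 1) ∧ ∑ S ∈ P, S.card = N + 1}.ncard := by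
  obtain ⟨ε, hε, h⟩ := exists_tverberg_perturbation_bound hf hq
  obtain ⟨g, hg, hgen, hgf⟩ := exists_genPos_approx hf hε
  exact (H g hg.continuousOn).trans (Set.ncard_le_ncard
    (fun P hP => ⟨h g hg hgf P hP, hgen.card_le_of_tverberg hq hN hP⟩) (Set.toFinite _))

end Robustness

section Coincidences

variable {N d : ℕ}

/-- A family of pairwise disjoint nonempty faces of total codimension `d`. -/
def IsBalanced (d : ℕ) (P : Finset (Finset (Fin (N+1)))) : Prop :=
  (∀ S ∈ P, S.Nonempty) ∧ (∀ S ∈ P, ∀ T ∈ P, S ≠ T → Disjoint S T) ∧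
    ∑ S ∈ P, S.card + d = (d + 1) * P.card

/-- The points of balanced families of faces whose images lie on all faces of the family. -/
def coincSet (d : ℕ) (f : (Fin (N+1) → ℝ) → Euc d) : Set (Fin (N+1) → ℝ) :=
  {y | ∃ P, IsBalanced d P ∧ ∃ S ∈ P, y ∈ simpFace S ∧ ∀ T ∈ P, f y ∈ f '' simpFace T}

lemma coincSet_subset_stdSimp {f : (Fin (N+1) → ℝ) → Euc d} : coincSet d f ⊆ stdSimp N :=
  fun _ ⟨_, _, _, _, hy, _⟩ => hy.1

lemma GenPos.finite_coincSet {f : (Fin (N+1) → ℝ) → Euc d} (hf : GenPos d f) :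
    (coincSet d f).Finite := by
  refine (Set.finite_iUnion fun P : {P : Finset (Finset (Fin (N+1))) // IsBalanced d P} =>
    (hf P.1 P.2.1 P.2.2.1).2 P.2.2.2).subset ?_
  rintro y ⟨P, hP, h⟩
  exact mem_iUnion.2 ⟨⟨P, hP⟩, h⟩

/-- Coincidences in general position lie in the relative interiors of the faces. -/
lemma GenPos.pos_of_coincidence {f : (Fin (N+1) → ℝ) → Euc d} (hf : GenPos d f)
    {P : Finset (Finset (Fin (N+1)))} (hP : IsBalanced d P) {S : Finset (Fin (N+1))} (hS : S ∈ P)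
    {y : Fin (N+1) → ℝ} (hy : y ∈ simpFace S) (hyP : ∀ T ∈ P, f y ∈ f '' simpFace T)
    {v : Fin (N+1)} (hv : v ∈ S) : 0 < y v := by
  classical
  refine (hy.1.1 v).lt_of_ne fun h0 => ?_
  have hy' := mem_simpFace_erase hy h0.symm
  have hne := nonempty_of_mem_simpFace hy'
  have hnot : S.erase v ∉ P.erase S := fun h => by
    obtain ⟨h1, h2⟩ := Finset.mem_erase.1 h
    have := hP.2.1 _ h2 S hS h1
    exact hne.ne_empty (Finset.disjoint_self_iff_empty _ |>.1
      (this.mono_right (Finset.erase_subset _ _)))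
  refine (hf (insert (S.erase v) (P.erase S)) ?_ ?_).1 ?_ ⟨f y, ?_⟩
  · intro T hT
    obtain rfl | hT := Finset.mem_insert.1 hT
    · exact hne
    · exact hP.1 T (Finset.mem_of_mem_erase hT)
  · intro T hT U hU hTU
    obtain rfl | hT := Finset.mem_insert.1 hT <;> obtain rfl | hU := Finset.mem_insert.1 hU
    · exact absurd rfl hTU
    · obtain ⟨h1, h2⟩ := Finset.mem_erase.1 hU
      exact (hP.2.1 S hS U h2 h1.symm).mono_left (Finset.erase_subset _ _)
    · obtain ⟨h1, h2⟩ := Finset.mem_erase.1 hT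
      exact (hP.2.1 T h2 S hS h1).mono_right (Finset.erase_subset _ _)
    · exact hP.2.1 T (Finset.mem_of_mem_erase hT) U (Finset.mem_of_mem_erase hU) hTU
  · rw [Finset.sum_insert hnot, Finset.card_insert_of_notMem hnot, Finset.card_erase_add_one hS,
      ← hP.2.2, ← Finset.add_sum_erase P _ hS, ← Finset.card_erase_add_one hv]
    omega
  · intro T hT
    obtain rfl | hT := Finset.mem_insert.1 hT
    · exact ⟨y, hy', rfl⟩
    · exact hyP T (Finset.mem_of_mem_erase hT)

/-- In general position, the boundary of a `d`-face avoids the coincidences of a balanced family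
of faces disjoint from it. -/
lemma GenPos.notMem_image_boundary {f : (Fin (N+1) → ℝ) → Euc d} (hf : GenPos d f)
    {P : Finset (Finset (Fin (N+1)))} (hP : IsBalanced d P) {p : Euc d}
    (hp : ∀ T ∈ P, p ∈ f '' simpFace T) {S : Finset (Fin (N+1))} (hS : S.card = d + 1)
    (hSP : ∀ T ∈ P, Disjoint S T) : p ∉ f '' simpFaceBoundary S := by
  classical
  rintro ⟨x, ⟨hx, v, hv, hxv⟩, rfl⟩
  have hx' := mem_simpFace_erase hx hxv
  have hdis : ∀ T ∈ P, Disjoint (S.erase v) T := fun T hT =>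
    (hSP T hT).mono_left (Finset.erase_subset _ _)
  have hne := nonempty_of_mem_simpFace hx'
  have hnot : S.erase v ∉ P := fun h =>
    hne.ne_empty (Finset.disjoint_self_iff_empty _ |>.1 (hdis _ h))
  refine (hf (insert (S.erase v) P) ?_ ?_).1 ?_ ⟨f x, ?_⟩
  · intro T hT
    obtain rfl | hT := Finset.mem_insert.1 hT
    · exact hne
    · exact hP.1 T hT
  · intro T hT U hU hTU
    obtain rfl | hT := Finset.mem_insert.1 hT <;> obtain rfl | hU := Finset.mem_insert.1 hU
    · exact absurd rfl hTU
    · exact hdis U hU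
    · exact (hdis T hT).symm
    · exact hP.2.1 T hT U hU hTU
  · have h1 := Finset.card_erase_add_one hv
    have h2 := hP.2.2
    rw [Finset.sum_insert hnot, Finset.card_insert_of_notMem hnot, mul_add, ← h2]
    omega
  · intro T hT
    obtain rfl | hT := Finset.mem_insert.1 hT
    · exact ⟨x, hx', rfl⟩
    · exact hp T hT

/-- The height function with geometrically decreasing weights. -/
def height (r : ℝ) (x : Fin (N+1) → ℝ) : ℝ := ∑ v : Fin (N+1), r ^ (v : ℕ) * x v

lemma continuous_height (r : ℝ) : Continuous (height (N := N) r) := by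
  unfold height
  fun_prop

lemma height_smul (r a : ℝ) (x : Fin (N+1) → ℝ) : height r (a • x) = a * height r x := by
  simp only [height, Finset.mul_sum, Pi.smul_apply, smul_eq_mul]
  exact Finset.sum_congr rfl fun _ _ => by ring

lemma height_nonneg {r : ℝ} (hr : 0 ≤ r) {x : Fin (N+1) → ℝ} (hx : ∀ i, 0 ≤ x i) :
    0 ≤ height r x :=
  Finset.sum_nonneg fun i _ => mul_nonneg (pow_nonneg hr _) (hx i)

lemma height_le_one {r : ℝ} (hr : 0 ≤ r) (hr1 : r ≤ 1) {x : Fin (N+1) → ℝ} (hx : x ∈ stdSimp N) :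
    height r x ≤ 1 := by
  rw [← hx.2]
  exact Finset.sum_le_sum fun i _ => mul_le_of_le_one_left (hx.1 i) (pow_le_one₀ hr hr1)

lemma height_pos {r : ℝ} (hr : 0 < r) {x : Fin (N+1) → ℝ} (hx : x ∈ stdSimp N) :
    0 < height r x := by
  refine (height_nonneg hr.le hx.1).lt_of_ne fun h => ?_
  have h1 := (Finset.sum_eq_zero_iff_of_nonneg fun i _ =>
    mul_nonneg (pow_nonneg hr.le _) (hx.1 i)).1 h.symm
  have h2 : ∑ i, x i = 0 := Finset.sum_eq_zero fun i hi =>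
    (mul_eq_zero.1 (h1 i hi)).resolve_left (pow_pos hr _).ne'
  linarith [hx.2]

lemma height_lt_height {r c : ℝ} (hr : 0 < r) (hr1 : r ≤ 1) (hrc : r < c)
    {x y : Fin (N+1) → ℝ} (hx : x ∈ stdSimp N) (hy : y ∈ stdSimp N) {v : Fin (N+1)}
    (hyv : c ≤ y v) (hxv : ∀ w ≤ v, x w = 0) : height r x < height r y := by
  have h1 : height r x ≤ r ^ (v + 1 : ℕ) := by
    calc height r x ≤ ∑ w, r ^ (v + 1 : ℕ) * x w := by
          refine Finset.sum_le_sum fun w _ => ?_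
          obtain h | h := le_or_gt w v
          · simp [hxv w h]
          · exact mul_le_mul_of_nonneg_right
              (pow_le_pow_of_le_one hr.le hr1 (Nat.succ_le_of_lt h)) (hx.1 w)
      _ = r ^ (v + 1 : ℕ) := by rw [← Finset.mul_sum, hx.2, mul_one]
  have h2 : r ^ (v : ℕ) * y v ≤ height r y :=
    Finset.single_le_sum (f := fun w : Fin (N+1) => r ^ (w : ℕ) * y w)
      (fun i _ => mul_nonneg (pow_nonneg hr.le _) (hy.1 i)) (Finset.mem_univ v)
  have h3 : r ^ (v + 1 : ℕ) < r ^ (v : ℕ) * y v := by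
    rw [pow_succ]
    exact mul_lt_mul_of_pos_left (hrc.trans_le hyv) (pow_pos hr _)
  linarith

/-- For all but finitely many weights the height function separates finitely many points. -/
lemma exists_height_injOn {Y : Set (Fin (N+1) → ℝ)} (hY : Y.Finite) {c : ℝ} (hc : 0 < c) :
    ∃ r, 0 < r ∧ r < c ∧ InjOn (height r) Y := by
  classical
  let poly : (Fin (N+1) → ℝ) → Polynomial ℝ := fun z =>
    ∑ v : Fin (N+1), Polynomial.monomial (v : ℕ) (z v)
  have heval : ∀ r z, (poly z).eval r = height r z := fun r z => by
    simp only [poly, Polynomial.eval_finsetSum, Polynomial.eval_monomial, height]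
    exact Finset.sum_congr rfl fun _ _ => mul_comm _ _
  have hne : ∀ z, z ≠ 0 → poly z ≠ 0 := by
    intro z hz h
    refine hz (funext fun v => ?_)
    have := congrArg (fun p => Polynomial.coeff p v) h
    simpa [poly, Polynomial.finsetSum_coeff, Polynomial.coeff_monomial, Fin.val_inj] using this
  have hfin : (⋃ z ∈ Y ×ˢ Y ∩ {z | z.1 - z.2 ≠ 0}, {r | (poly (z.1 - z.2)).IsRoot r}).Finite := by
    refine ((hY.prod hY).inter_of_left _).biUnion fun z hz => ?_
    exact Polynomial.finite_setOfPred_isRoot (hne _ hz.2)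
  obtain ⟨r, hr, hrn⟩ := ((Ioo_infinite hc).sdiff hfin).nonempty
  refine ⟨r, hr.1, hr.2, fun x hx y hy hxy => ?_⟩
  by_contra h
  refine hrn (mem_iUnion₂.2 ⟨(x, y), ⟨⟨hx, hy⟩, sub_ne_zero.2 h⟩, ?_⟩)
  simp only [mem_ofPred_eq, Polynomial.IsRoot, heval]
  have : height r (x - y) = height r x - height r y := by
    simp [height, mul_sub, Finset.sum_sub_distrib]
  rw [this, hxy, sub_self]

end Coincidences

section Lift

variable {N d : ℕ}

lemma simpFaceBoundary_of_mem_of_mem {S T : Finset (Fin (N+1))} (hST : S.card = T.card)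
    (hne : S ≠ T) {x : Fin (N+1) → ℝ} (hxS : x ∈ simpFace S) (hxT : x ∈ simpFace T) :
    x ∈ simpFaceBoundary S := by
  refine ⟨hxS, ?_⟩
  by_contra! h
  refine hne (Finset.eq_of_subset_of_card_le (fun i hi => ?_) hST.ge)
  by_contra hiT
  exact h i hi (hxT.2 i hiT)

lemma mem_simpFaceBoundary_of_mem_skel (hd : 1 ≤ d) {S : Finset (Fin (N+1))}
    (hS : S.card = d + 1) {x : Fin (N+1) → ℝ} (hxS : x ∈ simpFace S) (hx : x ∈ skel N (d - 1)) :
    x ∈ simpFaceBoundary S := by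
  refine ⟨hxS, ?_⟩
  by_contra! h
  have h1 : (S : Set (Fin (N+1))).ncard ≤ {i | x i ≠ 0}.ncard :=
    Set.ncard_le_ncard (fun i hi => h i hi) (Set.toFinite _)
  have h2 := hx.2
  rw [Set.ncard_coe_finset] at h1
  omega

/-- A map agreeing with `f` on the `(d-1)`-skeleton which avoids `p` on all `d`-faces around whose
boundary `f` does not wind around `p`. -/
lemma exists_avoiding_extension (hd : 1 ≤ d) {f : (Fin (N+1) → ℝ) → Euc d} (hf : Continuous f)
    (p : Euc d) :
    ∃ e : (Fin (N+1) → ℝ) → Euc d, Continuous e ∧ EqOn e f (skel N (d - 1)) ∧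
      ∀ S : Finset (Fin (N+1)), S.card = d + 1 → ¬ InWne d f S p → ∀ x ∈ simpFace S, e x ≠ p := by
  classical
  have h1 : ∀ S : Finset (Fin (N+1)), ∃ φ : (Fin (N+1) → ℝ) → Euc d, Continuous φ ∧
      EqOn φ f (simpFaceBoundary S) ∧ (¬ InWne d f S p → ∀ x, φ x ≠ p) := by
    intro S
    by_cases hS : InWne d f S p
    · exact ⟨f, hf, fun _ _ => rfl, fun h => absurd hS h⟩
    · obtain ⟨φ, h1, h2, h3⟩ := exists_extension_of_not_inWne hS
      exact ⟨φ, h1, h2, fun _ => h3⟩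
  choose φ hφ hφf hφp using h1
  let I := {S : Finset (Fin (N+1)) // S.card = d + 1}
  let e₀ : (Fin (N+1) → ℝ) → Euc d := fun x =>
    if h : ∃ S : I, x ∈ simpFace S.1 then φ h.choose.1 x else f x
  have he₀ : ∀ S : I, EqOn e₀ (φ S.1) (simpFace S.1) := by
    intro S x hx
    have h : ∃ S : I, x ∈ simpFace S.1 := ⟨S, hx⟩
    simp only [e₀, dif_pos h]
    by_cases hS : h.choose.1 = S.1
    · rw [hS]
    · have hc : h.choose.1.card = S.1.card := h.choose.2.trans S.2.symm
      rw [hφf _ (simpFaceBoundary_of_mem_of_mem hc hS h.choose_spec hx),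
        hφf _ (simpFaceBoundary_of_mem_of_mem hc.symm (Ne.symm hS) hx h.choose_spec)]
  have he₀f : EqOn e₀ f (skel N (d - 1)) := by
    intro x hx
    by_cases h : ∃ S : I, x ∈ simpFace S.1
    · obtain ⟨S, hS⟩ := h
      rw [he₀ S hS, hφf _ (mem_simpFaceBoundary_of_mem_skel hd S.2 hS hx)]
    · simp only [e₀, dif_neg h]
  have hclosed : IsClosed (⋃ S : I, simpFace S.1) :=
    isClosed_iUnion_of_finite fun S => isClosed_simpFace S.1
  have hcont : ContinuousOn e₀ (⋃ S : I, simpFace S.1) :=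
    (locallyFinite_of_finite _).continuousOn_iUnion (fun S => isClosed_simpFace S.1)
      fun S => (hφ S.1).continuousOn.congr (he₀ S)
  obtain ⟨e, he, hee⟩ := exists_continuous_eqOn ((isClosed_skel N (d - 1)).union hclosed)
    ((hf.continuousOn.congr he₀f).union_of_isClosed hcont (isClosed_skel N (d - 1)) hclosed)
  refine ⟨e, he, fun x hx => (hee (Or.inl hx)).trans (he₀f hx), fun S hS hSp x hx => ?_⟩
  rw [hee (Or.inr (mem_iUnion.2 ⟨⟨S, hS⟩, hx⟩)), he₀ ⟨S, hS⟩ hx]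
  exact hφp S hSp x

/-- A family of maps agreeing with `f` on the `(d-1)`-skeleton that interpolates avoiding
extensions at given heights. -/
lemma exists_interpolating_family (hd : 1 ≤ d) {f : (Fin (N+1) → ℝ) → Euc d} (hf : Continuous f)
    {Y : Set (Fin (N+1) → ℝ)} (hY : Y.Finite) {h : (Fin (N+1) → ℝ) → ℝ} (hh : InjOn h Y) :
    ∃ E : ℝ → (Fin (N+1) → ℝ) → Euc d, Continuous (Function.uncurry E) ∧
      (∀ η, EqOn (E η) f (skel N (d - 1))) ∧
      ∀ y ∈ Y, ∀ S : Finset (Fin (N+1)), S.card = d + 1 → ¬ InWne d f S (f y) →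
        ∀ x ∈ simpFace S, E (h y) x ≠ f y := by
  classical
  choose e he hef hep using fun y : Fin (N+1) → ℝ => exists_avoiding_extension hd hf (f y)
  refine ⟨fun η x => f x + ∑ y ∈ hY.toFinset,
    (Lagrange.basis hY.toFinset h y).eval η • (e y x - f x), ?_, fun η x hx => ?_,
    fun y hy S hS hSp x hx => ?_⟩
  · refine (hf.comp continuous_snd).add (continuous_finsetSum _ fun y _ => ?_)
    exact ((Polynomial.continuous _).comp continuous_fst).smul
      (((he y).comp continuous_snd).sub (hf.comp continuous_snd))
  · simp only [add_eq_left]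
    exact Finset.sum_eq_zero fun y _ => by rw [hef y hx, sub_self, smul_zero]
  · have hyY : y ∈ hY.toFinset := hY.mem_toFinset.2 hy
    have : ∑ z ∈ hY.toFinset, (Lagrange.basis hY.toFinset h z).eval (h y) • (e z x - f x) =
        e y x - f x := by
      rw [Finset.sum_eq_single y]
      · rw [Lagrange.eval_basis_self (by simpa using hh) hyY, one_smul]
      · intro z _ hzy
        rw [Lagrange.eval_basis_of_ne hzy hyY, zero_smul]
      · exact fun h => absurd hyY h
    simp only [this, add_sub_cancel]
    exact hep y S hS hSp x hx

/-- A continuous function vanishing on the `(d-1)`-skeleton and positive in the interiors of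
`d`-faces. -/
def bump (d : ℕ) (x : Fin (N+1) → ℝ) : ℝ :=
  min 1 (∑ S ∈ Finset.univ.filter fun S : Finset (Fin (N+1)) => S.card = d + 1, ∏ v ∈ S, x v)

lemma continuous_bump : Continuous (bump (N := N) d) := by
  unfold bump
  fun_prop

lemma bump_nonneg {x : Fin (N+1) → ℝ} (hx : ∀ i, 0 ≤ x i) : 0 ≤ bump d x :=
  le_min zero_le_one (Finset.sum_nonneg fun _ _ => Finset.prod_nonneg fun i _ => hx i)

lemma bump_le_one (x : Fin (N+1) → ℝ) : bump d x ≤ 1 := min_le_left _ _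

lemma bump_eq_zero {S : Finset (Fin (N+1))} (hS : S.card ≤ d) {x : Fin (N+1) → ℝ}
    (hx : ∀ i ∉ S, x i = 0) : bump d x = 0 := by
  have : ∑ S ∈ Finset.univ.filter fun S : Finset (Fin (N+1)) => S.card = d + 1,
      ∏ v ∈ S, x v = 0 := by
    refine Finset.sum_eq_zero fun T hT => ?_
    have hT := (Finset.mem_filter.1 hT).2
    obtain ⟨v, hvT, hvS⟩ : ∃ v ∈ T, v ∉ S := by
      by_contra! h
      have := Finset.card_le_card h
      omega
    exact Finset.prod_eq_zero hvT (hx v hvS)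
  rw [bump, this]
  simp

lemma bump_pos {S : Finset (Fin (N+1))} (hS : S.card = d + 1) {x : Fin (N+1) → ℝ}
    (hx : x ∈ simpFace S) (hxb : x ∉ simpFaceBoundary S) : 0 < bump d x := by
  have hpos : ∀ v ∈ S, 0 < x v := fun v hv =>
    (hx.1.1 v).lt_of_ne fun h => hxb ⟨hx, v, hv, h.symm⟩
  refine lt_min one_pos ((Finset.prod_pos hpos).trans_le ?_)
  exact Finset.single_le_sum (f := fun T : Finset (Fin (N+1)) => ∏ v ∈ T, x v)
    (fun T _ => Finset.prod_nonneg fun i _ => hx.1.1 i) (by simp [hS])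

/-- A uniform lower bound for the bump function at the preimages of points off the image of the
boundary. -/
lemma exists_bump_bound (hd : 1 ≤ d) {f : (Fin (N+1) → ℝ) → Euc d}
    {E : ℝ → (Fin (N+1) → ℝ) → Euc d} (hE : Continuous (Function.uncurry E))
    (hEf : ∀ η, EqOn (E η) f (skel N (d - 1))) {Z : Set (Euc d)} (hZ : Z.Finite) :
    ∃ M > 0, ∀ p ∈ Z, ∀ S : Finset (Fin (N+1)), S.card = d + 1 → p ∉ f '' simpFaceBoundary S →
      ∀ η ∈ Icc (0 : ℝ) 1, ∀ x ∈ simpFace S, E η x = p → 1 < M * bump d x := by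
  have hsingle : ∀ i : Z × Finset (Fin (N+1)), ∃ M > 0, i.2.card = d + 1 →
      (i.1 : Euc d) ∉ f '' simpFaceBoundary i.2 →
      ∀ η ∈ Icc (0 : ℝ) 1, ∀ x ∈ simpFace i.2, E η x = i.1 → 1 < M * bump d x := by
    rintro ⟨⟨p, hp⟩, S⟩
    by_cases hS : S.card = d + 1 ∧ p ∉ f '' simpFaceBoundary S
    swap
    · exact ⟨1, one_pos, fun h h' => absurd ⟨h, h'⟩ hS⟩
    obtain ⟨hS, hpS⟩ := hS
    let K : Set (ℝ × (Fin (N+1) → ℝ)) := (Icc 0 1 ×ˢ simpFace S) ∩ Function.uncurry E ⁻¹' {p}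
    have hK : IsCompact K := (isCompact_Icc.prod (isCompact_simpFace S)).inter_right
      (isClosed_singleton.preimage hE)
    have hpos : ∀ z ∈ K, 0 < bump d z.2 := by
      rintro ⟨η, x⟩ ⟨⟨_, hx⟩, hxp⟩
      refine bump_pos hS hx fun hxb => hpS ⟨x, hxb, ?_⟩
      rw [← hEf η (simpFaceBoundary_subset_skel (by omega) hxb)]
      exact hxp
    obtain ⟨c, hc, hcK⟩ : ∃ c > 0, ∀ z ∈ K, c ≤ bump d z.2 := by
      obtain hKe | hKn := K.eq_empty_or_nonempty
      · exact ⟨1, one_pos, by simp [hKe]⟩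
      · obtain ⟨z, hz, hmin⟩ := hK.exists_isMinOn hKn
          (continuous_bump.comp continuous_snd).continuousOn
        exact ⟨_, hpos z hz, fun w hw => hmin hw⟩
    refine ⟨2 / c, by positivity, fun _ _ η hη x hx hxp => ?_⟩
    have h1 := hcK (η, x) ⟨⟨hη, hx⟩, hxp⟩
    calc (1 : ℝ) < 2 := one_lt_two
      _ = 2 / c * c := by field_simp
      _ ≤ 2 / c * bump d x := mul_le_mul_of_nonneg_left h1 (by positivity)
  have := hZ.to_subtype
  choose M hM h using hsingle
  by_cases hne : Nonempty (Z × Finset (Fin (N+1)))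
  swap
  · exact ⟨1, one_pos, fun p hp S => absurd ⟨(⟨p, hp⟩, S)⟩ hne⟩
  obtain ⟨i, hi⟩ := Finite.exists_max M
  refine ⟨M i, hM i, fun p hp S hS hpS η hη x hx hxp => ?_⟩
  exact (h (⟨p, hp⟩, S) hS hpS η hη x hx hxp).trans_le
    (mul_le_mul_of_nonneg_right (hi _) (bump_nonneg hx.1.1))

end Lift

section LiftData

variable {N d : ℕ}

/-- The data needed to lift `f` to a map to `ℝ^{d+1}` on a simplex with additional vertices: a
family of maps `E`, the last coordinate `G` on the original simplex, the last coordinate `C` at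
the additional vertices, and the last coordinate `h` of the coincidences. -/
structure LiftData (d : ℕ) {N : ℕ} (f : (Fin (N+1) → ℝ) → Euc d) where
  E : ℝ → (Fin (N+1) → ℝ) → Euc d
  G : (Fin (N+1) → ℝ) → ℝ
  C : ℝ
  h : (Fin (N+1) → ℝ) → ℝ
  continuous_E : Continuous (Function.uncurry E)
  continuous_G : Continuous G
  eqOn_skel : ∀ η, EqOn (E η) f (skel N (d - 1))
  le_half : ∀ y, (∀ i, 0 ≤ y i) → ∀ s, G y + C * s ≤ 1 → s ≤ 1 / 2
  G_le_one : ∀ y ∈ stdSimp N, G y ≤ 1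
  G_smul : ∀ S : Finset (Fin (N+1)), S.card ≤ d → ∀ y ∈ simpFace S, ∀ s,
    G ((1 - s) • y) + C * s = h y + s * (C - h y)
  h_lt : ∀ y ∈ stdSimp N, h y < C
  h_pos : ∀ y ∈ stdSimp N, 0 < h y
  h_lt_h : ∀ y ∈ coincSet d f, ∀ z ∈ coincSet d f, ∀ v, z v ≠ 0 → (∀ w ≤ v, y w = 0) → h y < h z
  G_neg : ∀ y ∈ coincSet d f, ∀ S : Finset (Fin (N+1)), S.card = d + 1 →
    f y ∉ f '' simpFaceBoundary S → ∀ η ∈ Icc (0 : ℝ) 1, ∀ x ∈ simpFace S, E η x = f y → G x < 0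
  inWne : ∀ y ∈ coincSet d f, ∀ S : Finset (Fin (N+1)), S.card = d + 1 →
    ∀ x ∈ simpFace S, E (h y) x = f y → InWne d f S (f y)

lemma exists_pos_le_coords {Y : Set (Fin (N+1) → ℝ)} (hY : Y.Finite) (hY' : Y ⊆ stdSimp N) :
    ∃ c > 0, c ≤ 1 ∧ ∀ y ∈ Y, ∀ v, y v ≠ 0 → c ≤ y v := by
  classical
  have := hY.to_subtype
  by_cases hne : Nonempty (Y × Fin (N+1))
  swap
  · exact ⟨1, one_pos, le_rfl, fun y hy v => absurd ⟨(⟨y, hy⟩, v)⟩ hne⟩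
  let g : Y × Fin (N+1) → ℝ := fun i => if i.1.1 i.2 = 0 then 1 else i.1.1 i.2
  obtain ⟨i, hi⟩ := Finite.exists_min g
  have hg : ∀ j, 0 < g j := fun j => by
    simp only [g]
    split_ifs with h
    · exact one_pos
    · exact ((hY' j.1.2).1 j.2).lt_of_ne (Ne.symm h)
  refine ⟨min 1 (g i), lt_min one_pos (hg i), min_le_left _ _, fun y hy v hv => ?_⟩
  refine (min_le_right _ _).trans ((hi (⟨y, hy⟩, v)).trans ?_)
  simp [g, hv]

lemma GenPos.nonempty_liftData {f : (Fin (N+1) → ℝ) → Euc d} (hgen : GenPos d f) (hd : 1 ≤ d)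
    (hf : Continuous f) : Nonempty (LiftData d f) := by
  have hY := hgen.finite_coincSet
  obtain ⟨c, hc, hc1, hcY⟩ := exists_pos_le_coords hY coincSet_subset_stdSimp
  obtain ⟨r, hr, hrc, hinj⟩ := exists_height_injOn hY hc
  have hr1 : r ≤ 1 := hrc.le.trans hc1
  obtain ⟨E, hE, hEf, hEp⟩ := exists_interpolating_family hd hf hY hinj
  obtain ⟨M, hM, hMb⟩ := exists_bump_bound hd hE hEf (hY.image f)
  refine ⟨{
    E := E
    G := fun x => height r x - M * bump d x
    C := 2 * M + 4
    h := height r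
    continuous_E := hE
    continuous_G := (continuous_height r).sub (continuous_bump.const_mul M)
    eqOn_skel := hEf
    le_half := fun y hy s hs => ?_
    G_le_one := fun y hy => ?_
    G_smul := fun S hS y hy s => ?_
    h_lt := fun y hy => ?_
    h_pos := fun y hy => height_pos hr hy
    h_lt_h := fun y hy z hz v hv hyv => height_lt_height hr hr1 hrc (coincSet_subset_stdSimp hy)
      (coincSet_subset_stdSimp hz) (hcY z hz v hv) hyv
    G_neg := fun y hy S hS hyS η hη x hx hxy => ?_
    inWne := fun y hy S hS x hx hxy => ?_ }⟩
  · have h1 := height_nonneg hr.le hy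
    have h2 := mul_le_mul_of_nonneg_left (bump_le_one (d := d) y) hM.le
    by_contra! h3
    nlinarith
  · have h1 := height_le_one hr.le hr1 hy
    have h2 := mul_nonneg hM.le (bump_nonneg (d := d) hy.1)
    linarith
  · rw [height_smul, bump_eq_zero hS fun i hi => by simp [hy.2 i hi]]
    ring
  · have h1 := height_le_one hr.le hr1 hy
    linarith
  · have h1 := height_le_one hr.le hr1 hx.1
    have h2 := hMb (f y) ⟨y, hy, rfl⟩ S hS hyS η hη x hx hxy
    linarith
  · by_contra h
    exact hEp y hy S hS h x hx hxy

/-- The set of size at most `d` in `P` that contains the smallest vertex in such sets. -/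
def IsLeadingSet (d : ℕ) (P : Finset (Finset (Fin (N+1)))) (S : Finset (Fin (N+1))) : Prop :=
  S ∈ P ∧ S.card ≤ d ∧ ∃ v ∈ S, ∀ T ∈ P, T.card ≤ d → T ≠ S → ∀ w ∈ T, v < w

lemma IsLeadingSet.eq {P : Finset (Finset (Fin (N+1)))} {S T : Finset (Fin (N+1))}
    (hS : IsLeadingSet d P S) (hT : IsLeadingSet d P T) : S = T := by
  obtain ⟨hS, hSd, v, hv, hvm⟩ := hS
  obtain ⟨hT, hTd, w, hw, hwm⟩ := hT
  by_contra h
  exact lt_asymm (hvm T hT hTd (Ne.symm h) w hw) (hwm S hS hSd h v hv)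

lemma exists_isLeadingSet {P : Finset (Finset (Fin (N+1)))}
    (hdisj : ∀ S ∈ P, ∀ T ∈ P, S ≠ T → Disjoint S T) {S₀ : Finset (Fin (N+1))} (hS₀ : S₀ ∈ P)
    (hcard : S₀.card ≤ d) (hne : S₀.Nonempty) : ∃ S, IsLeadingSet d P S := by
  classical
  let U := (P.filter fun S => S.card ≤ d).biUnion id
  have hU : U.Nonempty := by
    obtain ⟨v, hv⟩ := hne
    exact ⟨v, Finset.mem_biUnion.2 ⟨S₀, Finset.mem_filter.2 ⟨hS₀, hcard⟩, hv⟩⟩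
  obtain ⟨S, hS, hvS⟩ := Finset.mem_biUnion.1 (U.min'_mem hU)
  obtain ⟨hSP, hSd⟩ := Finset.mem_filter.1 hS
  refine ⟨S, hSP, hSd, U.min' hU, hvS, fun T hT hTd hTS w hw => ?_⟩
  refine (U.min'_le w (Finset.mem_biUnion.2 ⟨T, Finset.mem_filter.2 ⟨hT, hTd⟩, hw⟩)).lt_of_ne ?_
  intro h
  exact Finset.disjoint_left.1 (hdisj T hT S hSP hTS) hw (h ▸ hvS)

/-- The sets of size at most `d` of a family over which the `d`-skeletal map has a coincidence
form a balanced family, and all the other sets have size `d + 1`. -/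
lemma GenPos.isBalanced_filter {f : (Fin (N+1) → ℝ) → Euc d} (hgen : GenPos d f) {q : ℕ}
    (hq : 1 ≤ q) (hN : N = (d + 1) * (q - 1)) {P : Finset (Finset (Fin (N+1)))}
    (hPq : P.card = q) (hne : ∀ S ∈ P, S.Nonempty)
    (hdisj : ∀ S ∈ P, ∀ T ∈ P, S ≠ T → Disjoint S T) {p : Euc d}
    (hp : ∀ S ∈ P, S.card ≤ d → p ∈ f '' simpFace S) :
    IsBalanced d (P.filter fun S => S.card ≤ d) ∧ ∀ S ∈ P, S.card ≤ d + 1 := by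
  classical
  have h1 := sum_card_le_of_disjoint hdisj
  have hsub : P.filter (fun S => S.card ≤ d) ⊆ P := Finset.filter_subset _ _
  have hne' : ∀ S ∈ P.filter (fun S => S.card ≤ d), S.Nonempty := fun S hS => hne S (hsub hS)
  have hdisj' : ∀ S ∈ P.filter (fun S => S.card ≤ d), ∀ T ∈ P.filter (fun S => S.card ≤ d),
      S ≠ T → Disjoint S T := fun S hS T hT => hdisj S (hsub hS) T (hsub hT)
  have h2 := (hgen _ hne' hdisj').1
  have h3 : ¬ _ := fun h => h2 h
    ⟨p, fun S hS => hp S (hsub hS) (Finset.mem_filter.1 hS).2⟩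
  have h4 := Finset.sum_filter_add_sum_filter_not P (fun S => S.card ≤ d) fun S => S.card
  have h5 := Finset.card_filter_add_card_filter_not (s := P) fun S => S.card ≤ d
  have h6 : ∑ S ∈ P.filter (fun S => ¬ S.card ≤ d), (d + 1) ≤
      ∑ S ∈ P.filter (fun S => ¬ S.card ≤ d), S.card := by
    refine Finset.sum_le_sum fun S hS => ?_
    have := (Finset.mem_filter.1 hS).2
    omega
  have h7 := h6
  rw [Finset.sum_const, smul_eq_mul] at h7
  obtain ⟨q, rfl⟩ : ∃ r, q = r + 1 := ⟨q - 1, by omega⟩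
  simp only [Nat.add_sub_cancel] at hN
  have h8 : ∑ S ∈ P.filter (fun S => ¬ S.card ≤ d), S.card =
      (P.filter fun S => ¬ S.card ≤ d).card * (d + 1) := by nlinarith
  refine ⟨⟨hne', hdisj', by nlinarith⟩, fun S hS => ?_⟩
  by_contra h
  have hS' : S ∈ P.filter fun S => ¬ S.card ≤ d := Finset.mem_filter.2 ⟨hS, by omega⟩
  have : ∑ S ∈ P.filter (fun S => ¬ S.card ≤ d), (d + 1) <
      ∑ S ∈ P.filter (fun S => ¬ S.card ≤ d), S.card := by
    refine Finset.sum_lt_sum (fun T hT => ?_) ⟨S, hS', by omega⟩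
    have := (Finset.mem_filter.1 hT).2
    omega
  rw [Finset.sum_const, smul_eq_mul] at this
  omega

/-- A coincidence of the lifted map gives a winding partition, and at most the leading set
supports a point without weight at the additional vertices. -/
lemma LiftData.isWindingPartition {f : (Fin (N+1) → ℝ) → Euc d} (L : LiftData d f)
    (hgen : GenPos d f) {q : ℕ} (hd : 1 ≤ d) (hq : 1 ≤ q) (hN : N = (d + 1) * (q - 1))
    {P : Finset (Finset (Fin (N+1)))} (hPq : P.card = q) (hne : ∀ S ∈ P, S.Nonempty)
    (hdisj : ∀ S ∈ P, ∀ T ∈ P, S ≠ T → Disjoint S T) {p : Euc d} {η : ℝ} (hη : η ≤ 1)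
    {s : Finset (Fin (N+1)) → ℝ} {y : Finset (Fin (N+1)) → Fin (N+1) → ℝ}
    (hs : ∀ S ∈ P, 0 ≤ s S) (hy : ∀ S ∈ P, y S ∈ simpFace S) (hE : ∀ S ∈ P, L.E η (y S) = p)
    (hG : ∀ S ∈ P, L.G ((1 - s S) • y S) + L.C * s S = η) (hzero : ∃ S ∈ P, s S = 0) :
    IsWindingPartition d q f P ∧ ∀ S ∈ P, s S = 0 → IsLeadingSet d P S := by
  classical
  have hfy : ∀ S ∈ P, S.card ≤ d → f (y S) = p := fun S hS hSd => by
    rw [← hE S hS, L.eqOn_skel η (simpFace_subset_skel (by omega) (hy S hS))]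
  have hp : ∀ S ∈ P, S.card ≤ d → p ∈ f '' simpFace S := fun S hS hSd =>
    ⟨y S, hy S hS, hfy S hS hSd⟩
  obtain ⟨hbal, hcard⟩ := hgen.isBalanced_filter hq hN hPq hne hdisj hp
  have hpbal : ∀ T ∈ P.filter (fun S => S.card ≤ d), p ∈ f '' simpFace T := fun T hT =>
    hp T (Finset.mem_filter.1 hT).1 (Finset.mem_filter.1 hT).2
  have hcoinc : ∀ S ∈ P, S.card ≤ d → y S ∈ coincSet d f := fun S hS hSd =>
    ⟨_, hbal, S, Finset.mem_filter.2 ⟨hS, hSd⟩, hy S hS, by rw [hfy S hS hSd]; exact hpbal⟩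
  have hpos : ∀ S ∈ P, S.card ≤ d → ∀ v ∈ S, 0 < y S v := fun S hS hSd v hv =>
    hgen.pos_of_coincidence hbal (Finset.mem_filter.2 ⟨hS, hSd⟩) (hy S hS)
      (by rw [hfy S hS hSd]; exact hpbal) hv
  have hle : ∀ S ∈ P, S.card ≤ d → L.h (y S) ≤ η := fun S hS hSd => by
    rw [← hG S hS, L.G_smul S hSd _ (hy S hS)]
    have := mul_nonneg (hs S hS) (sub_nonneg.2 (L.h_lt _ (hy S hS).1).le)
    linarith
  have heq : ∀ S ∈ P, S.card ≤ d → s S = 0 → L.h (y S) = η := fun S hS hSd h0 => by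
    rw [← hG S hS, L.G_smul S hSd _ (hy S hS), h0]
    ring
  obtain ⟨S₁, hS₁, hS₁d⟩ := exists_small_of_disjoint hq hN hPq hdisj hd
  have hη0 : 0 < η := (L.h_pos _ (hy S₁ hS₁).1).trans_le (hle S₁ hS₁ hS₁d)
  have hsmall : ∀ S ∈ P, s S = 0 → S.card ≤ d := by
    intro S hS h0
    by_contra hSd
    have hSc : S.card = d + 1 := by have := hcard S hS; omega
    have hnot := hgen.notMem_image_boundary hbal hpbal hSc fun T hT => by
      obtain ⟨hT, hTd⟩ := Finset.mem_filter.1 hT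
      exact hdisj S hS T hT (by rintro rfl; exact hSd hTd)
    rw [← hfy S₁ hS₁ hS₁d] at hnot
    have h1 := L.G_neg _ (hcoinc S₁ hS₁ hS₁d) S hSc hnot η ⟨hη0.le, hη⟩ (y S) (hy S hS)
      ((hE S hS).trans (hfy S₁ hS₁ hS₁d).symm)
    have h2 := hG S hS
    rw [h0] at h2
    simp only [sub_zero, one_smul, mul_zero, add_zero] at h2
    linarith
  obtain ⟨S₂, hS₂⟩ := exists_isLeadingSet hdisj hS₁ hS₁d (hne S₁ hS₁)
  have hlead : ∀ S ∈ P, s S = 0 → S = S₂ := by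
    intro S hS h0
    by_contra hSS₂
    obtain ⟨hS₂P, hS₂d, v, hv, hvm⟩ := hS₂
    have h1 := L.h_lt_h _ (hcoinc S hS (hsmall S hS h0)) _ (hcoinc S₂ hS₂P hS₂d) v
      (hpos S₂ hS₂P hS₂d v hv).ne' fun w hw => (hy S hS).2 w fun hwS =>
        (hvm S hS (hsmall S hS h0) hSS₂ w hwS).not_ge hw
    have h2 := heq S hS (hsmall S hS h0) h0
    have h3 := hle S₂ hS₂P hS₂d
    linarith
  refine ⟨⟨hPq, hne, hcard, hdisj, p, fun S hS => ⟨hp S hS, fun hSc => ?_⟩⟩,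
    fun S hS h0 => hlead S hS h0 ▸ hS₂⟩
  obtain ⟨S₀, hS₀, h0⟩ := hzero
  have hd₀ := hsmall S₀ hS₀ h0
  rw [← hfy S₀ hS₀ hd₀]
  refine L.inWne _ (hcoinc S₀ hS₀ hd₀) S hSc (y S) (hy S hS) ?_
  rw [heq S₀ hS₀ hd₀ h0, hE S hS, hfy S₀ hS₀ hd₀]

end LiftData

section LiftMap

variable {N N' d a : ℕ}

/-- The point of `ℝ^{d+1}` with first coordinate `η` and remaining coordinates `p`. -/
def consEuc (p : Euc d) (η : ℝ) : Euc (d + 1) := WithLp.toLp 2 (Fin.cons η fun i => p i)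

lemma continuous_consEuc : Continuous fun z : Euc d × ℝ => consEuc z.1 z.2 := by
  refine (PiLp.continuous_toLp 2 _).comp (continuous_pi fun i => ?_)
  refine Fin.cases ?_ (fun j => ?_) i
  · simpa using continuous_snd
  · simp only [Fin.cons_succ]
    fun_prop

lemma consEuc_inj {p p' : Euc d} {η η' : ℝ} (h : consEuc p η = consEuc p' η') :
    p = p' ∧ η = η' := by
  have h1 : ∀ i, consEuc p η i = consEuc p' η' i := fun i => by rw [h]
  refine ⟨?_, by simpa [consEuc] using h1 0⟩
  ext i
  simpa [consEuc] using h1 i.succ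

/-- The original vertices in a set of vertices of the larger simplex. -/
def basePart (e : Fin (N+1) ⊕ Fin a ≃ Fin (N'+1)) (T : Finset (Fin (N'+1))) :
    Finset (Fin (N+1)) :=
  Finset.univ.filter fun v => e (Sum.inl v) ∈ T

/-- The additional vertices in a set of vertices of the larger simplex. -/
def apexPart (e : Fin (N+1) ⊕ Fin a ≃ Fin (N'+1)) (T : Finset (Fin (N'+1))) : Finset (Fin a) :=
  Finset.univ.filter fun v => e (Sum.inr v) ∈ T

/-- The original coordinates of a point. -/
def baseCoords (e : Fin (N+1) ⊕ Fin a ≃ Fin (N'+1)) (x : Fin (N'+1) → ℝ) : Fin (N+1) → ℝ :=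
  fun v => x (e (Sum.inl v))

/-- The total weight of a point at the additional vertices. -/
def apexWeight (e : Fin (N+1) ⊕ Fin a ≃ Fin (N'+1)) (x : Fin (N'+1) → ℝ) : ℝ :=
  ∑ v, x (e (Sum.inr v))

variable {e : Fin (N+1) ⊕ Fin a ≃ Fin (N'+1)}

lemma mem_basePart {T : Finset (Fin (N'+1))} {v : Fin (N+1)} :
    v ∈ basePart e T ↔ e (Sum.inl v) ∈ T := by simp [basePart]

lemma mem_apexPart {T : Finset (Fin (N'+1))} {v : Fin a} :
    v ∈ apexPart e T ↔ e (Sum.inr v) ∈ T := by simp [apexPart]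

lemma disjoint_basePart {T U : Finset (Fin (N'+1))} (h : Disjoint T U) :
    Disjoint (basePart e T) (basePart e U) :=
  Finset.disjoint_left.2 fun _ hT hU =>
    Finset.disjoint_left.1 h (mem_basePart.1 hT) (mem_basePart.1 hU)

lemma disjoint_apexPart {T U : Finset (Fin (N'+1))} (h : Disjoint T U) :
    Disjoint (apexPart e T) (apexPart e U) :=
  Finset.disjoint_left.2 fun _ hT hU =>
    Finset.disjoint_left.1 h (mem_apexPart.1 hT) (mem_apexPart.1 hU)

lemma sum_baseCoords {x : Fin (N'+1) → ℝ} (hx : x ∈ stdSimp N') :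
    ∑ v, baseCoords e x v = 1 - apexWeight e x := by
  rw [← hx.2, ← Equiv.sum_comp e, Fintype.sum_sum_type]
  simp only [baseCoords, apexWeight]
  ring

lemma apexWeight_nonneg {x : Fin (N'+1) → ℝ} (hx : x ∈ stdSimp N') : 0 ≤ apexWeight e x :=
  Finset.sum_nonneg fun _ _ => hx.1 _

lemma apexWeight_eq_zero {T : Finset (Fin (N'+1))} {x : Fin (N'+1) → ℝ} (hx : x ∈ simpFace T)
    (hT : apexPart e T = ∅) : apexWeight e x = 0 :=
  Finset.sum_eq_zero fun v _ => hx.2 _ fun h =>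
    Finset.notMem_empty v (hT ▸ mem_apexPart.2 h)

variable {f : (Fin (N+1) → ℝ) → Euc d}

/-- The last coordinate of the lifted map. -/
def LiftData.liftHeight (L : LiftData d f) (e : Fin (N+1) ⊕ Fin a ≃ Fin (N'+1))
    (x : Fin (N'+1) → ℝ) : ℝ :=
  L.G (baseCoords e x) + L.C * apexWeight e x

/-- The lifted map. -/
def LiftData.liftMap (L : LiftData d f) (e : Fin (N+1) ⊕ Fin a ≃ Fin (N'+1))
    (x : Fin (N'+1) → ℝ) : Euc (d + 1) :=
  consEuc (L.E (L.liftHeight e x)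
    ((max (∑ v, baseCoords e x v) (1 / 2))⁻¹ • baseCoords e x)) (L.liftHeight e x)

lemma LiftData.continuous_liftMap (L : LiftData d f) (e : Fin (N+1) ⊕ Fin a ≃ Fin (N'+1)) :
    Continuous (L.liftMap e) := by
  have hb : Continuous (baseCoords e) := continuous_pi fun v => continuous_apply _
  have hs : Continuous (apexWeight e) := by unfold apexWeight; fun_prop
  have hh : Continuous (L.liftHeight e) :=
    (L.continuous_G.comp hb).add (continuous_const.mul hs)
  have hm : Continuous fun x => (max (∑ v, baseCoords e x v) (1 / 2))⁻¹ := by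
    refine Continuous.inv₀ ?_ fun x => (lt_max_of_lt_right one_half_pos).ne'
    exact (continuous_finsetSum _ fun v _ => (continuous_apply v).comp hb).max continuous_const
  exact continuous_consEuc.comp ((L.continuous_E.comp (hh.prodMk (hm.smul hb))).prodMk hh)

lemma LiftData.liftHeight_le_one (L : LiftData d f) {T : Finset (Fin (N'+1))}
    {x : Fin (N'+1) → ℝ} (hx : x ∈ simpFace T) (hT : apexPart e T = ∅) :
    L.liftHeight e x ≤ 1 := by
  have h0 := apexWeight_eq_zero hx hT
  rw [LiftData.liftHeight, h0, mul_zero, add_zero]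
  refine L.G_le_one _ ⟨fun v => hx.1.1 _, ?_⟩
  rw [sum_baseCoords hx.1, h0, sub_zero]

/-- The normalized original coordinates of a point at which the lifted map has height at most
one. -/
lemma LiftData.exists_base_point (L : LiftData d f) {T : Finset (Fin (N'+1))}
    {x : Fin (N'+1) → ℝ} (hx : x ∈ simpFace T) {p : Euc d} {η : ℝ} (hη : η ≤ 1)
    (hxp : L.liftMap e x = consEuc p η) :
    ∃ y ∈ simpFace (basePart e T), L.E η y = p ∧
      L.G ((1 - apexWeight e x) • y) + L.C * apexWeight e x = η := by
  obtain ⟨h1, h2⟩ := consEuc_inj hxp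
  rw [h2] at h1
  have hs := L.le_half (baseCoords e x) (fun v => hx.1.1 _) (apexWeight e x) (h2.le.trans hη)
  have hpos : 0 < 1 - apexWeight e x := by linarith
  have hmax : max (∑ v, baseCoords e x v) (1 / 2) = 1 - apexWeight e x := by
    rw [sum_baseCoords hx.1]
    exact max_eq_left (by linarith)
  rw [hmax] at h1
  refine ⟨(1 - apexWeight e x)⁻¹ • baseCoords e x, ⟨⟨fun v => ?_, ?_⟩, fun v hv => ?_⟩, h1, ?_⟩
  · exact mul_nonneg (inv_nonneg.2 hpos.le) (hx.1.1 _)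
  · simp only [Pi.smul_apply, smul_eq_mul]
    rw [← Finset.mul_sum, sum_baseCoords hx.1, inv_mul_cancel₀ hpos.ne']
  · have : baseCoords e x v = 0 := hx.2 _ fun h => hv (mem_basePart.2 h)
    simp [this]
  · rw [smul_inv_smul₀ hpos.ne']
    exact h2

/-- The combinatorial structure of the Tverberg partitions of the lifted map. -/
lemma LiftData.base_of_tverberg (L : LiftData d f) (hgen : GenPos d f) (hd : 1 ≤ d)
    (ha : N = (d + 1) * a) {Q : Finset (Finset (Fin (N'+1)))}
    (hQ : IsTverbergPartition (a + 1) (L.liftMap e) Q) :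
    IsWindingPartition d (a + 1) f (Q.image (basePart e)) ∧ InjOn (basePart e) Q ∧
      (∃ T ∈ Q, apexPart e T = ∅) ∧
      ∀ T ∈ Q, apexPart e T = ∅ → IsLeadingSet d (Q.image (basePart e)) (basePart e T) := by
  classical
  obtain ⟨hQa, -, hdisj, z, hz⟩ := hQ
  have hz := mem_iInter₂.1 hz
  choose! x hx hxz using hz
  obtain ⟨T₀, hT₀, hT₀e⟩ : ∃ T ∈ Q, apexPart e T = ∅ := by
    by_contra! h
    have h1 : Q.card ≤ (Q.biUnion (apexPart e)).card := by
      rw [Finset.card_biUnion fun T hT U hU hTU => disjoint_apexPart (hdisj T hT U hU hTU),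
        Finset.card_eq_sum_ones]
      exact Finset.sum_le_sum fun T hT => Finset.card_pos.2 (h T hT)
    have h2 := h1.trans (Finset.card_le_univ _)
    rw [hQa, Fintype.card_fin] at h2
    omega
  obtain ⟨p, η, hη, hpz⟩ : ∃ p η, η ≤ 1 ∧ z = consEuc p η :=
    ⟨_, _, L.liftHeight_le_one (hx T₀ hT₀) hT₀e, (hxz T₀ hT₀).symm⟩
  have hpt : ∀ T ∈ Q, ∃ y ∈ simpFace (basePart e T), L.E η y = p ∧
      L.G ((1 - apexWeight e (x T)) • y) + L.C * apexWeight e (x T) = η := fun T hT =>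
    L.exists_base_point (hx T hT) hη ((hxz T hT).trans hpz)
  have hne : ∀ T ∈ Q, (basePart e T).Nonempty := fun T hT => by
    obtain ⟨y, hy, -⟩ := hpt T hT
    exact nonempty_of_mem_simpFace hy
  have hinj : InjOn (basePart e) Q := by
    intro T hT U hU hTU
    by_contra h
    have h1 := disjoint_basePart (e := e) (hdisj T hT U hU h)
    rw [hTU] at h1
    exact (hne U hU).ne_empty (Finset.disjoint_self_iff_empty _ |>.1 h1)
  have hpt' : ∀ S ∈ Q.image (basePart e), ∃ (s : ℝ) (y : Fin (N+1) → ℝ), 0 ≤ s ∧ y ∈ simpFace S ∧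
      L.E η y = p ∧ L.G ((1 - s) • y) + L.C * s = η ∧
      ∀ T ∈ Q, basePart e T = S → apexPart e T = ∅ → s = 0 := by
    intro S hS
    obtain ⟨T, hT, rfl⟩ := Finset.mem_image.1 hS
    obtain ⟨y, hy, h1, h2⟩ := hpt T hT
    refine ⟨_, y, apexWeight_nonneg (hx T hT).1, hy, h1, h2, fun U hU hUT hUe => ?_⟩
    obtain rfl := hinj hU hT hUT
    exact apexWeight_eq_zero (hx U hU) hUe
  choose! s y hs hy hE hG hzero using hpt'
  have himg : ∀ T ∈ Q, basePart e T ∈ Q.image (basePart e) := fun T hT =>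
    Finset.mem_image_of_mem _ hT
  obtain ⟨h1, h2⟩ := L.isWindingPartition hgen hd (Nat.le_add_left 1 a) (by simpa using ha)
    (by rw [Finset.card_image_of_injOn hinj, hQa])
    (by
      intro S hS
      obtain ⟨T, hT, rfl⟩ := Finset.mem_image.1 hS
      exact hne T hT)
    (by
      intro S hS S' hS' hSS'
      obtain ⟨T, hT, rfl⟩ := Finset.mem_image.1 hS
      obtain ⟨T', hT', rfl⟩ := Finset.mem_image.1 hS'
      exact disjoint_basePart (hdisj T hT T' hT' fun h => hSS' (h ▸ rfl)))
    hη hs hy hE hG ⟨_, himg T₀ hT₀, hzero _ (himg T₀ hT₀) T₀ hT₀ rfl hT₀e⟩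
  exact ⟨h1, hinj, ⟨T₀, hT₀, hT₀e⟩, fun T hT hTe =>
    h2 _ (himg T hT) (hzero _ (himg T hT) T hT rfl hTe)⟩

/-- The set of vertices with the given original and additional vertices. -/
def glueParts (e : Fin (N+1) ⊕ Fin a ≃ Fin (N'+1)) (S : Finset (Fin (N+1)))
    (A : Finset (Fin a)) : Finset (Fin (N'+1)) :=
  (S.disjSum A).map e.toEmbedding

lemma glueParts_basePart_apexPart (T : Finset (Fin (N'+1))) :
    glueParts e (basePart e T) (apexPart e T) = T := by
  ext i
  obtain ⟨j | j, rfl⟩ := e.surjective i <;> simp [glueParts, mem_basePart, mem_apexPart]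

/-- The Tverberg partitions of the lifted map over a given partition inject into the assignments of
the additional vertices to the sets other than the leading one. -/
lemma LiftData.card_fibre_le (L : LiftData d f) (hgen : GenPos d f) (hd : 1 ≤ d)
    (ha : N = (d + 1) * a) (P : Finset (Finset (Fin (N+1)))) :
    {Q : Finset (Finset (Fin (N'+1))) | IsTverbergPartition (a + 1) (L.liftMap e) Q ∧
      Q.image (basePart e) = P}.ncard ≤ a.factorial := by
  classical
  obtain hemp | ⟨Q₁, hQ₁, hQ₁P⟩ := Set.eq_empty_or_nonempty
    {Q : Finset (Finset (Fin (N'+1))) | IsTverbergPartition (a + 1) (L.liftMap e) Q ∧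
      Q.image (basePart e) = P}
  · simp [hemp]
  obtain ⟨hwind, -, ⟨T₁, hT₁, hT₁e⟩, hlead₁⟩ := L.base_of_tverberg hgen hd ha hQ₁
  have hS₀ := hlead₁ T₁ hT₁ hT₁e
  rw [hQ₁P] at hwind hS₀
  generalize basePart e T₁ = S₀ at hS₀
  have hcard : Fintype.card (P.erase S₀) = a := by
    rw [Fintype.card_coe, Finset.card_erase_of_mem hS₀.1, hwind.1, Nat.add_sub_cancel]
  let build : (P.erase S₀ ↪ Fin a) → Finset (Finset (Fin (N'+1))) := fun α =>
    P.image fun S => glueParts e S (Finset.univ.filter fun i => ∃ h : S ∈ P.erase S₀, α ⟨S, h⟩ = i)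
  have hsub : {Q : Finset (Finset (Fin (N'+1))) | IsTverbergPartition (a + 1) (L.liftMap e) Q ∧
      Q.image (basePart e) = P} ⊆ Set.range build := by
    rintro Q ⟨hQ, rfl⟩
    obtain ⟨-, hinj, -, hlead⟩ := L.base_of_tverberg hgen hd ha hQ
    have hdisj := hQ.2.2.1
    have hchoice : ∀ S : (Q.image (basePart e)).erase S₀,
        ∃ T ∈ Q, basePart e T = S.1 ∧ ∃ i, i ∈ apexPart e T := by
      rintro ⟨S, hS⟩
      obtain ⟨hne, hS⟩ := Finset.mem_erase.1 hS
      obtain ⟨T, hT, rfl⟩ := Finset.mem_image.1 hS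
      refine ⟨T, hT, rfl, Finset.nonempty_iff_ne_empty.2 fun hTe => hne ?_⟩
      exact (hlead T hT hTe).eq hS₀
    choose t ht htS α hα using hchoice
    have hαt : ∀ S T, T ∈ Q → α S ∈ apexPart e T → t S = T := fun S T hT h => by
      by_contra hne
      exact Finset.disjoint_left.1 (disjoint_apexPart (hdisj _ (ht S) T hT hne)) (hα S) h
    have hαinj : Function.Injective α := fun S S' h => by
      have := hαt S (t S') (ht S') (h ▸ hα S')
      exact Subtype.ext (by rw [← htS S, ← htS S', this])
    have hαsurj : Function.Surjective α :=
      ((Fintype.bijective_iff_injective_and_card α).2 ⟨hαinj, by simpa using hcard⟩).2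
    refine ⟨⟨α, hαinj⟩, ?_⟩
    simp only [build, Finset.image_image]
    conv_rhs => rw [← Finset.image_id (s := Q)]
    refine Finset.image_congr fun T hT => ?_
    conv_rhs => rw [id, ← glueParts_basePart_apexPart (e := e) T]
    simp only [Function.comp_apply]
    congr 1
    ext i
    simp only [Finset.mem_filter, Finset.mem_univ, true_and, Function.Embedding.coeFn_mk]
    constructor
    · rintro ⟨h, rfl⟩
      have h1 := hα ⟨basePart e T, h⟩
      rwa [hinj (ht _) hT (htS ⟨basePart e T, h⟩)] at h1
    · intro hi
      obtain ⟨S, rfl⟩ := hαsurj i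
      have h1 := hαt S T hT hi
      have h2 : S.1 = basePart e T := by rw [← htS S, h1]
      exact ⟨h2 ▸ S.2, by congr 1; exact Subtype.ext h2.symm⟩
  calc _ ≤ (Set.range build).ncard := Set.ncard_le_ncard hsub (Set.toFinite _)
    _ ≤ Fintype.card (P.erase S₀ ↪ Fin a) := by
        rw [← Set.image_univ, ← Nat.card_eq_fintype_card, ← Set.ncard_univ]
        exact Set.ncard_image_le (Set.toFinite _)
    _ = a.factorial := by
        rw [Fintype.card_embedding_eq, hcard, Fintype.card_fin, Nat.descFactorial_self]

/-- The number of Tverberg partitions of the lifted map is at most `a!` times the number of winding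
partitions of `f`. -/
lemma LiftData.ncard_tverberg_le (L : LiftData d f) (hgen : GenPos d f) (hd : 1 ≤ d)
    (ha : N = (d + 1) * a) (e : Fin (N+1) ⊕ Fin a ≃ Fin (N'+1)) :
    {Q : Finset (Finset (Fin (N'+1))) | IsTverbergPartition (a + 1) (L.liftMap e) Q}.ncard ≤
      a.factorial *
        {P : Finset (Finset (Fin (N+1))) | IsWindingPartition d (a + 1) f P}.ncard := by
  classical
  rw [Set.ncard_eq_toFinset_card', Set.ncard_eq_toFinset_card']
  refine Finset.card_le_mul_card_image_of_maps_to (f := fun Q => Q.image (basePart e))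
    (fun Q hQ => ?_) _ fun P hP => ?_
  · rw [Set.mem_toFinset] at hQ ⊢
    exact (L.base_of_tverberg hgen hd ha hQ).1
  · refine le_trans (le_of_eq ?_) (L.card_fibre_le hgen hd ha P (e := e))
    rw [Set.ncard_eq_toFinset_card']
    congr 1
    ext Q
    simp

end LiftMap

section Equivalences

variable {N d : ℕ}

lemma InWne.congr {f g : (Fin (N+1) → ℝ) → Euc d} {S : Finset (Fin (N+1))}
    (h : EqOn f g (simpFaceBoundary S)) {p : Euc d} (hp : InWne d f S p) : InWne d g S p := by
  obtain ⟨x, hx, hxp⟩ | hp := hp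
  · exact Or.inl ⟨x, hx, (h hx).symm.trans hxp⟩
  · refine Or.inr fun ⟨φ, y, hφ, hy⟩ => hp ⟨φ, y, fun x => (hφ x).trans (h x.2).symm, hy⟩

lemma IsWindingPartition.congr (hd : 1 ≤ d) {q : ℕ} {f g : (Fin (N+1) → ℝ) → Euc d}
    (h : EqOn f g (skel N (d - 1))) {P : Finset (Finset (Fin (N+1)))}
    (hP : IsWindingPartition d q f P) : IsWindingPartition d q g P := by
  obtain ⟨h1, h2, h3, h4, p, hp⟩ := hP
  refine ⟨h1, h2, h3, h4, p, fun S hS => ⟨fun hSd => ?_, fun hSd => ?_⟩⟩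
  · obtain ⟨x, hx, hxp⟩ := (hp S hS).1 hSd
    exact ⟨x, hx, (h (simpFace_subset_skel (by omega) hx)).symm.trans hxp⟩
  · exact ((hp S hS).2 hSd).congr fun x hx => h (simpFaceBoundary_subset_skel (by omega) hx)

/-- The skeletal version follows from the version for maps on the full simplex. -/
lemma le_ncard_tverberg_skel {q n : ℕ} (hq : 1 ≤ q) (hN : N = (d + 1) * (q - 1))
    (H : ∀ f : (Fin (N+1) → ℝ) → Euc d, ContinuousOn f (stdSimp N) →
      n ≤ {P : Finset (Finset (Fin (N+1))) | IsTverbergPartition q f P}.ncard)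
    {f : (Fin (N+1) → ℝ) → Euc d} (hf : ContinuousOn f (skel N d)) :
    n ≤ {P : Finset (Finset (Fin (N+1))) | IsTverbergPartition q f P}.ncard := by
  obtain ⟨g, hg, hgf⟩ := exists_continuous_eqOn (isClosed_skel N d) hf
  refine (le_ncard_covering_tverberg hq hN H hg).trans (Set.ncard_le_ncard ?_ (Set.toFinite _))
  rintro P ⟨⟨h1, h2, h3, p, hp⟩, h4, -⟩
  refine ⟨h1, h2, h3, p, mem_iInter₂.2 fun S hS => ?_⟩
  obtain ⟨x, hx, hxp⟩ := mem_iInter₂.1 hp S hS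
  exact ⟨x, hx, (hgf (simpFace_subset_skel (h4 S hS) hx)).symm.trans hxp⟩

/-- Winding partitions are Tverberg partitions of maps on the `d`-skeleton. -/
lemma IsWindingPartition.isTverbergPartition {q : ℕ} {f : (Fin (N+1) → ℝ) → Euc d}
    (hf : ContinuousOn f (skel N d)) {P : Finset (Finset (Fin (N+1)))}
    (hP : IsWindingPartition d q f P) : IsTverbergPartition q f P := by
  obtain ⟨h1, h2, h3, h4, p, hp⟩ := hP
  refine ⟨h1, h2, h4, p, mem_iInter₂.2 fun S hS => ?_⟩
  obtain h | h := (h3 S hS).lt_or_eq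
  · exact (hp S hS).1 (by omega)
  · by_contra hn
    exact not_inWne_of_extension (h2 S hS) (hf.mono (simpFace_subset_skel (h3 S hS)))
      (fun _ _ => rfl) (fun x hx hxp => hn ⟨x, hx, hxp⟩) ((hp S hS).2 h)

/-- The winding version in dimension `d` follows from the Tverberg version in dimension
`d + 1`. -/
lemma le_ncard_winding {N' a : ℕ} (hd : 1 ≤ d) (hN : N = (d + 1) * a) (hN' : N' = (d + 2) * a)
    (H : ∀ f : (Fin (N'+1) → ℝ) → Euc (d + 1), Continuous f → a.factorial ^ (d + 1) ≤
      {P : Finset (Finset (Fin (N'+1))) | IsTverbergPartition (a + 1) f P}.ncard)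
    {f : (Fin (N+1) → ℝ) → Euc d} (hf : ContinuousOn f (skel N (d - 1))) :
    a.factorial ^ d ≤
      {P : Finset (Finset (Fin (N+1))) | IsWindingPartition d (a + 1) f P}.ncard := by
  obtain ⟨F, hF, hFf⟩ := exists_continuous_eqOn (isClosed_skel N (d - 1)) hf
  obtain ⟨ε, hε, h⟩ := exists_winding_perturbation_bound hF hd (Nat.le_add_left 1 a)
    (by simpa using hN)
  obtain ⟨g, hg, hgen, hgF⟩ := exists_genPos_approx hF hε
  obtain ⟨L⟩ := hgen.nonempty_liftData hd hg
  have e : Fin (N+1) ⊕ Fin a ≃ Fin (N'+1) :=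
    finSumFinEquiv.trans (finCongr (by rw [hN, hN']; ring))
  have h1 := (H _ (L.continuous_liftMap e)).trans (L.ncard_tverberg_le hgen hd hN e)
  rw [pow_succ'] at h1
  refine (Nat.le_of_mul_le_mul_left h1 (Nat.factorial_pos a)).trans
    (Set.ncard_le_ncard (fun P hP => ?_) (Set.toFinite _))
  exact (h g hg hgF P hP).congr hd hFf

end Equivalences

end SierksmaHelpers

/-- Sierksma's conjecture, its `d`-skeleton version, and its winding-partition
version are all equivalent. -/
theorem sierksma_equivalences :
    ((∀ d q : ℕ, 1 ≤ d → 1 ≤ q →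
        ∀ f : (Fin ((d+1)*(q-1)+1) → ℝ) → Euc d,
          ContinuousOn f (stdSimp ((d+1)*(q-1))) →
          (Nat.factorial (q-1))^d ≤
            {P : Finset (Finset (Fin ((d+1)*(q-1)+1))) |
              IsTverbergPartition q f P}.ncard) ↔
      (∀ d q : ℕ, 1 ≤ d → 1 ≤ q →
        ∀ f : (Fin ((d+1)*(q-1)+1) → ℝ) → Euc d,
          ContinuousOn f (skel ((d+1)*(q-1)) d) →
          (Nat.factorial (q-1))^d ≤
            {P : Finset (Finset (Fin ((d+1)*(q-1)+1))) |
              IsTverbergPartition q f P}.ncard)) ∧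
    ((∀ d q : ℕ, 1 ≤ d → 1 ≤ q →
        ∀ f : (Fin ((d+1)*(q-1)+1) → ℝ) → Euc d,
          ContinuousOn f (skel ((d+1)*(q-1)) d) →
          (Nat.factorial (q-1))^d ≤
            {P : Finset (Finset (Fin ((d+1)*(q-1)+1))) |
              IsTverbergPartition q f P}.ncard) ↔
      (∀ d q : ℕ, 1 ≤ d → 1 ≤ q →
        ∀ f : (Fin ((d+1)*(q-1)+1) → ℝ) → Euc d,
          ContinuousOn f (skel ((d+1)*(q-1)) (d-1)) →
          (Nat.factorial (q-1))^d ≤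
            {P : Finset (Finset (Fin ((d+1)*(q-1)+1))) |
              IsWindingPartition d q f P}.ncard)) := by
  refine ⟨⟨fun H d q hd hq f hf => le_ncard_tverberg_skel hq rfl (H d q hd hq) hf,
    fun H d q hd hq f hf => H d q hd hq f (hf.mono (skel_subset_stdSimp _ _))⟩,
    fun H d q hd hq f hf => ?_, fun H d q hd hq f hf => ?_⟩
  · obtain ⟨a, rfl⟩ : ∃ a, q = a + 1 := ⟨q - 1, by omega⟩
    exact le_ncard_winding hd rfl rfl
      (fun F hF => H (d + 1) (a + 1) (Nat.le_add_left 1 d) hq F hF.continuousOn) hf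
  · exact (H d q hd hq f (hf.mono (skel_mono _ (Nat.sub_le d 1)))).trans
      (Set.ncard_le_ncard (fun P hP => hP.isTverbergPartition hf) (Set.toFinite _))
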